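/- There exists ε₀ > 0 such that for all 0 < ε ≤ ε₀, every λ ∈ ℝ, and every nonnegative integer ν, the following equivalence holds for any solution u^r of the radial ODE φ₂₂(1−r)(u^r)''(r) + ((1/r)φ₁₁(1−r) + φ₂(1−r))(u^r)'(r) − (ν²/r²)φ₁₁(1−r)u^r(r) = λu^r(r) on (0, 1−r₀) that is bounded near r = 0: the quasi-Neumann condition lim_{r→(1−r₀)⁻} p(1−r)·(u^r)'(r) = 0 holds if and only if u(r,θ) = u^r(r)cos(νθ) extends to a C² function on the closed unit disc satisfying D_ε u = λu everywhere. In particular, a C² eigenfunction of D_ε on the closed unit disc satisfies lim_{r→1−r₀} p(1−r)·∂u/∂r(r,θ) = 0 uniformly in θ. -/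

import Mathlib

open Real Set Filter Topology MeasureTheory

noncomputable def s0 (ε t : ℝ) : ℝ :=
  if 0 ≤ t ∧ t ≤ ε then π/2 + (t/ε) * Real.sqrt (1 - (t/ε)^2) + Real.arcsin (t/ε) else π

noncomputable def s12 (ε t : ℝ) : ℝ :=
  if 0 ≤ t ∧ t ≤ ε then -(2/3) * (1 - (t/ε)^2) ^ ((3:ℝ)/2) else 0

noncomputable def s2 (ε t : ℝ) : ℝ :=
  if 0 ≤ t ∧ t ≤ ε then
    π/8 + (1/12) * ((t/ε) * Real.sqrt (1 - (t/ε)^2) * (5 - 2*(t/ε)^2) + 3 * Real.arcsin (t/ε))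
  else π/4

noncomputable def s22 (ε t : ℝ) : ℝ :=
  if 0 ≤ t ∧ t ≤ ε then
    π/8 + (1/4) * ((t/ε) * Real.sqrt (1 - (t/ε)^2) * (2*(t/ε)^2 - 1) + Real.arcsin (t/ε))
  else π/4

noncomputable def s3 (ε t : ℝ) : ℝ :=
  if 0 ≤ t ∧ t ≤ ε then -(2/15) * (1 - (t/ε)^2) ^ ((5:ℝ)/2) else 0

noncomputable def s32 (ε t : ℝ) : ℝ :=
  if 0 ≤ t ∧ t ≤ ε then -(2/15) * (2 + 3*(t/ε)^2) * (1 - (t/ε)^2) ^ ((3:ℝ)/2) else 0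

noncomputable def phi11 (ε t : ℝ) : ℝ :=
  (1/2) * (s22 ε t * s2 ε t - s3 ε t * s12 ε t) / ((s12 ε t)^2 - s22 ε t * s0 ε t)

noncomputable def phi22 (ε t : ℝ) : ℝ :=
  (1/2) * ((s22 ε t)^2 - s32 ε t * s12 ε t) / ((s12 ε t)^2 - s22 ε t * s0 ε t)

noncomputable def phi2d (ε t : ℝ) : ℝ :=
  s12 ε t / ((s12 ε t)^2 - s22 ε t * s0 ε t)

/-- The principal Sturm–Liouville coefficient on the disc, as a function of the
radius `r`; this is `p(1−r)` in the paper's notation. -/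
noncomputable def pd (ε r0 r : ℝ) : ℝ :=
  (1/8) * (1 - ε) * Real.sign (1 - r0 - r) *
    Real.exp (∫ s in (1-ε)..r, (phi11 ε (1-s) + s * phi2d ε (1-s)) / (s * phi22 ε (1-s)))

/-- `q(1−r)` as a function of `r`. -/
noncomputable def qd (ε r0 r : ℝ) : ℝ :=
  -(pd ε r0 r / r^2) * (phi11 ε (1-r) / phi22 ε (1-r))

/-- The weight `w(1−r)` as a function of `r`. -/
noncomputable def wd (ε r0 r : ℝ) : ℝ := -pd ε r0 r / phi22 ε (1-r)

/-- `u` (with derivative `u'`) solves the radial ODE with angular frequency `ν`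
on the set `s`. -/
def IsRadSol (ε lam : ℝ) (ν : ℕ) (s : Set ℝ) (u u' : ℝ → ℝ) : Prop :=
  ∀ r ∈ s, HasDerivAt u (u' r) r ∧
    ∃ d2 : ℝ, HasDerivAt u' d2 r ∧
      phi22 ε (1-r) * d2 + ((1/r) * phi11 ε (1-r) + phi2d ε (1-r)) * u' r -
        ((ν:ℝ)^2/r^2) * phi11 ε (1-r) * u r = lam * u r

/-- The point of the plane (seen as `ℂ`) with polar coordinates `(r, θ)`. -/
noncomputable def pol (r θ : ℝ) : ℂ := (r : ℂ) * Complex.exp ((θ : ℂ) * Complex.I)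

/-- Radial partial derivative of `F` at `(r, θ)`. -/
noncomputable def Fr (F : ℂ → ℝ) (r θ : ℝ) : ℝ := deriv (fun t : ℝ => F (pol t θ)) r

/-- Second radial partial derivative of `F` at `(r, θ)`. -/
noncomputable def Frr (F : ℂ → ℝ) (r θ : ℝ) : ℝ :=
  deriv (deriv (fun t : ℝ => F (pol t θ))) r

/-- Second angular partial derivative of `F` at `(r, θ)`. -/
noncomputable def Ftt (F : ℂ → ℝ) (r θ : ℝ) : ℝ :=
  deriv (deriv (fun s : ℝ => F (pol r s))) θ

/-- `F` is a `C²` function on the closed unit disc satisfying `D_ε F = λ F`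
everywhere (expressed in polar coordinates). -/
def IsDiscSol (ε lam : ℝ) (F : ℂ → ℝ) : Prop :=
  ContDiffOn ℝ 2 F (Metric.closedBall 0 1) ∧
  ∀ r ∈ Ioc (0:ℝ) 1, ∀ θ : ℝ,
    phi11 ε (1-r) * ((1/r) * Fr F r θ + (1/r^2) * Ftt F r θ) +
      phi22 ε (1-r) * Frr F r θ + phi2d ε (1-r) * Fr F r θ = lam * F (pol r θ)

theorem mono_of_hd {f f' : ℝ → ℝ} {a b : ℝ} (hd : ∀ x ∈ Ioo a b, HasDerivAt f (f' x) x)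
    (h0 : ∀ x ∈ Ioo a b, 0 ≤ f' x) : MonotoneOn f (Ioo a b) := by
  apply monotoneOn_of_deriv_nonneg (convex_Ioo a b)
  · exact fun x hx => (hd x hx).continuousAt.continuousWithinAt
  · rw [interior_Ioo]; exact fun x hx => (hd x hx).differentiableAt.differentiableWithinAt
  · rw [interior_Ioo]; intro x hx; rw [(hd x hx).deriv]; exact h0 x hx

theorem P_upper {P q : ℝ → ℝ} {c δ : ℝ} (hδ : 0 < δ) (hc : 0 < c)
    (hP : ∀ x ∈ Ioo 0 δ, 0 < P x ∧ HasDerivAt P (P x * q x) x)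
    (hq : ∀ x ∈ Ioo 0 δ, c / x ≤ q x) : Tendsto P (𝓝[>] 0) (𝓝 0) := by
  have hm : MonotoneOn (fun x => P x * x ^ (-c)) (Ioo 0 δ) := by
    apply mono_of_hd (f' := fun x => P x * x ^ (-c) * (q x - c / x))
    · intro x hx
      have h1 := (hP x hx).2.mul (Real.hasDerivAt_rpow_const (p := -c) (Or.inl hx.1.ne'))
      refine h1.congr_deriv ?_
      rw [Real.rpow_sub_one hx.1.ne']
      ring
    · intro x hx
      have := (hP x hx).1
      have h2 := Real.rpow_pos_of_pos hx.1 (-c)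
      have h3 := hq x hx
      have : 0 ≤ q x - c / x := by linarith
      positivity
  set D := P (δ/2) * (δ/2) ^ (-c)
  have hle : ∀ᶠ x in 𝓝[>] (0:ℝ), P x ≤ D * x ^ c := by
    filter_upwards [Ioo_mem_nhdsGT (half_pos hδ)] with x hx
    have := hm ⟨hx.1, by linarith [hx.2]⟩ ⟨half_pos hδ, by linarith⟩ hx.2.le
    simp only at this
    rw [Real.rpow_neg hx.1.le, ← div_eq_mul_inv, div_le_iff₀ (Real.rpow_pos_of_pos hx.1 c)] at this
    exact this
  have hge : ∀ᶠ x in 𝓝[>] (0:ℝ), 0 ≤ P x := by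
    filter_upwards [Ioo_mem_nhdsGT hδ] with x hx using (hP x hx).1.le
  refine tendsto_of_tendsto_of_tendsto_of_le_of_le' tendsto_const_nhds ?_ hge hle
  have : Tendsto (fun x : ℝ => D * x ^ c) (𝓝 0) (𝓝 (D * 0 ^ c)) :=
    tendsto_const_nhds.mul (Real.continuousAt_rpow_const 0 c (Or.inr hc.le))
  rw [Real.zero_rpow hc.ne', mul_zero] at this
  exact this.mono_left nhdsWithin_le_nhds

theorem P_lower {P q : ℝ → ℝ} {δ : ℝ} (hδ : 0 < δ)
    (hP : ∀ x ∈ Ioo 0 δ, 0 < P x ∧ HasDerivAt P (P x * q x) x)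
    (hq : ∀ x ∈ Ioo 0 δ, q x ≤ 1 / (2 * x)) : ∃ c > 0, ∀ x ∈ Ioo 0 (δ/2), c * √x ≤ P x := by
  have hm : MonotoneOn (fun x => - (P x / √x)) (Ioo 0 δ) := by
    apply mono_of_hd (f' := fun x => P x / √x * (1 / (2 * x) - q x))
    · intro x hx
      have hs := Real.sqrt_pos.2 hx.1
      have h1 := ((hP x hx).2.div (Real.hasDerivAt_sqrt hx.1.ne') hs.ne').neg
      refine h1.congr_deriv ?_
      have h2 : x = √x ^ 2 := (Real.sq_sqrt hx.1.le).symm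
      generalize √x = s at *
      subst h2
      field_simp
      ring
    · intro x hx
      have := (hP x hx).1
      have h2 := Real.sqrt_pos.2 hx.1
      have : 0 ≤ 1 / (2 * x) - q x := by linarith [hq x hx]
      positivity
  have hd2 : δ/2 ∈ Ioo 0 δ := ⟨half_pos hδ, by linarith⟩
  refine ⟨P (δ/2) / √(δ/2), div_pos (hP _ hd2).1 (Real.sqrt_pos.2 (half_pos hδ)), ?_⟩
  intro x hx
  have := hm ⟨hx.1, by linarith [hx.2]⟩ hd2 hx.2.le
  simp only [neg_le_neg_iff] at this
  rwa [le_div_iff₀ (Real.sqrt_pos.2 hx.1)] at this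

theorem core_lim {A B g w w' P : ℝ → ℝ} {δ b g0 : ℝ} (hδ : 0 < δ)
    (hA : ∀ x ∈ Ioo 0 δ, A x ≠ 0) (hB : Tendsto B (𝓝[>] 0) (𝓝 b)) (hb : b ≠ 0)
    (hg : Tendsto g (𝓝[>] 0) (𝓝 g0))
    (hw : ∀ x ∈ Ioo 0 δ, HasDerivAt w (w' x) x ∧ A x * w' x + B x * w x = g x)
    (hP : ∀ x ∈ Ioo 0 δ, 0 < P x ∧ HasDerivAt P (P x * (B x / A x)) x)
    (hP0 : Tendsto P (𝓝[>] 0) (𝓝 0)) (hPw : Tendsto (fun x => P x * w x) (𝓝[>] 0) (𝓝 0)) :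
    Tendsto w (𝓝[>] 0) (𝓝 (g0 / b)) := by
  have hI := Ioo_mem_nhdsGT hδ
  have hB0 : ∀ᶠ x in 𝓝[>] (0:ℝ), B x ≠ 0 := hB.eventually_ne hb
  have := HasDerivAt.lhopital_zero_nhdsGT (a := 0) (l := 𝓝 (g0 / b))
    (f := fun x => P x * w x) (f' := fun x => P x * (g x / A x)) (g := P)
    (g' := fun x => P x * (B x / A x)) ?_ ?_ ?_ hPw hP0 ?_
  · refine this.congr' ?_
    filter_upwards [hI] with x hx
    have := (hP x hx).1
    field_simp
  · filter_upwards [hI] with x hx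
    refine ((hP x hx).2.mul (hw x hx).1).congr_deriv ?_
    rw [← (hw x hx).2]
    have := hA x hx
    field_simp
    ring
  · filter_upwards [hI] with x hx using (hP x hx).2
  · filter_upwards [hI, hB0] with x hx h2
    have := (hP x hx).1
    have := hA x hx
    positivity
  · refine (hg.div hB hb).congr' ?_
    filter_upwards [hI, hB0] with x hx h2
    have := (hP x hx).1
    have := hA x hx
    simp only [Pi.div_apply]
    field_simp

theorem lim_of_bdd_deriv {f f' : ℝ → ℝ} {δ K : ℝ} (hδ : 0 < δ)
    (hf : ∀ x ∈ Ioo 0 δ, HasDerivAt f (f' x) x) (hK : ∀ x ∈ Ioo 0 δ, |f' x| ≤ K) :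
    ∃ l, Tendsto f (𝓝[>] 0) (𝓝 l) := by
  have hK0 : 0 ≤ K := (abs_nonneg _).trans (hK (δ/2) ⟨half_pos hδ, by linarith⟩)
  have h1 : LipschitzOnWith K.toNNReal f (Ioo 0 δ) := by
    apply Convex.lipschitzOnWith_of_nnnorm_hasDerivWithin_le (convex_Ioo 0 δ)
      (fun x hx => (hf x hx).hasDerivWithinAt)
    intro x hx
    rw [← NNReal.coe_le_coe]
    simpa [hK0] using hK x hx
  obtain ⟨g, hg, he⟩ := h1.extend_real
  refine ⟨g 0, ((hg.continuous.tendsto 0).mono_left nhdsWithin_le_nhds).congr' ?_⟩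
  filter_upwards [Ioo_mem_nhdsGT hδ] with x hx using (he hx).symm

theorem lim_of_sqrt_deriv {f f' : ℝ → ℝ} {δ K : ℝ} (hδ : 0 < δ)
    (hf : ∀ x ∈ Ioo 0 δ, HasDerivAt f (f' x) x) (hK : ∀ x ∈ Ioo 0 δ, |f' x| * √x ≤ K) :
    ∃ l, Tendsto f (𝓝[>] 0) (𝓝 l) := by
  have hmem : ∀ s ∈ Ioo 0 (√δ), s ^ 2 ∈ Ioo 0 δ := by
    intro s hs
    refine ⟨by have := hs.1; positivity, ?_⟩
    rw [← Real.lt_sqrt hs.1.le]; exact hs.2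
  obtain ⟨l, hl⟩ := lim_of_bdd_deriv (f := fun s => f (s ^ 2)) (f' := fun s => f' (s ^ 2) * (2 * s))
    (K := 2 * K) (Real.sqrt_pos.2 hδ) (by
      intro s hs
      have h2 : HasDerivAt (fun s : ℝ => s ^ 2) (2 * s) s := by simpa using hasDerivAt_pow 2 s
      exact HasDerivAt.comp (h := fun s : ℝ => s ^ 2) s (hf _ (hmem s hs)) h2) (by
      intro s hs
      have := hK _ (hmem s hs)
      rw [Real.sqrt_sq hs.1.le] at this
      rw [abs_mul, abs_of_pos (by linarith [hs.1] : (0:ℝ) < 2 * s)]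
      linarith)
  refine ⟨l, ?_⟩
  have ht : Tendsto (fun x => √x) (𝓝[>] (0:ℝ)) (𝓝[>] 0) := by
    apply tendsto_nhdsWithin_of_tendsto_nhds_of_eventually_within
    · have := (Real.continuous_sqrt.tendsto 0).mono_left (nhdsWithin_le_nhds (s := Ioi 0))
      simpa using this
    · filter_upwards [self_mem_nhdsWithin] with x hx using Real.sqrt_pos.2 hx
  refine (hl.comp ht).congr' ?_
  filter_upwards [self_mem_nhdsWithin] with x hx
  simp [Real.sq_sqrt (le_of_lt hx)]

theorem exP {q : ℝ → ℝ} (hq : ContinuousOn q (Ioi 0)) :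
    ∃ P : ℝ → ℝ, ∀ x > 0, 0 < P x ∧ HasDerivAt P (P x * q x) x := by
  refine ⟨fun x => Real.exp (∫ t in (1:ℝ)..x, q t), fun x hx => ⟨Real.exp_pos _, ?_⟩⟩
  have hi : IntervalIntegrable q volume 1 x := by
    apply (hq.mono ?_).intervalIntegrable
    intro y hy
    rcases le_total 1 x with h | h
    · rw [uIcc_of_le h] at hy; exact lt_of_lt_of_le one_pos hy.1
    · rw [uIcc_of_ge h] at hy; exact lt_of_lt_of_le hx hy.1
  exact (intervalIntegral.integral_hasDerivAt_right hi
    (ContinuousOn.stronglyMeasurableAtFilter isOpen_Ioi hq x hx)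
    (hq.continuousAt (Ioi_mem_nhds hx))).exp

theorem avg {q : ℝ → ℝ} {c δ : ℝ} (hq : ContinuousOn q (Ioi 0)) (hδ : 0 < δ) (hc : 0 < c)
    (hqc : ∀ x ∈ Ioo 0 δ, c / x ≤ q x) (hq0 : ∀ x > 0, 0 ≤ q x) :
    ∃ J : (ℝ → ℝ) → ℝ → ℝ,
      (∀ f, Continuous f → ∀ s > 0, HasDerivAt (J f) (q s * (f s - J f s)) s) ∧
      (∀ f, Continuous f → ∀ s > 0, ∀ m, (∀ σ ∈ Ioc 0 s, |f σ| ≤ m) → |J f s| ≤ m) ∧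
      (∀ f g, Continuous f → Continuous g → ∀ s > 0, J f s - J g s = J (fun x => f x - g x) s) := by
  obtain ⟨P, hP⟩ := exP hq
  have hPlim : Tendsto P (𝓝[>] 0) (𝓝 0) := P_upper hδ hc (fun x hx => hP x hx.1) hqc
  set Q : ℝ → ℝ := fun x => P x * q x with hQ
  have hQ0 : ∀ x > 0, 0 ≤ Q x := fun x hx => mul_nonneg (hP x hx).1.le (hq0 x hx)
  set P0 : ℝ → ℝ := fun x => if 0 < x then P x else 0 with hP0
  have hP0d : ∀ x > 0, HasDerivAt P0 (Q x) x := by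
    intro x hx
    apply (hP x hx).2.congr_of_eventuallyEq
    filter_upwards [Ioi_mem_nhds hx] with y hy
    simp only [hP0]; rw [if_pos (show 0 < y from hy)]
  have hP0c : ContinuousOn P0 (Ici 0) := by
    intro x hx
    rcases eq_or_lt_of_le (show (0:ℝ) ≤ x from hx) with h | h
    · subst h
      rw [← continuousWithinAt_Ioi_iff_Ici]
      show Tendsto _ _ _
      have : P0 0 = 0 := by simp [hP0]
      rw [this]
      apply hPlim.congr'
      filter_upwards [self_mem_nhdsWithin] with y hy
      simp only [hP0]; rw [if_pos (show 0 < y from hy)]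
    · exact (hP0d x h).continuousAt.continuousWithinAt
  have hQi : ∀ s > 0, IntervalIntegrable Q volume 0 s := by
    intro s hs
    rw [intervalIntegrable_iff_integrableOn_Ioc_of_le hs.le]
    exact intervalIntegral.integrableOn_deriv_of_nonneg (hP0c.mono Icc_subset_Ici_self)
      (fun x hx => hP0d x hx.1) (fun x hx => hQ0 x hx.1)
  have hQint : ∀ s > 0, ∫ x in (0:ℝ)..s, Q x = P s := by
    intro s hs
    rw [intervalIntegral.integral_eq_sub_of_hasDerivAt_of_le hs.le (hP0c.mono Icc_subset_Ici_self)
      (fun x hx => hP0d x hx.1) (hQi s hs)]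
    simp [hP0, hs]
  have hQc : ContinuousOn Q (Ioi 0) := by
    apply ContinuousOn.mul _ hq
    exact fun x hx => (hP x hx).2.continuousAt.continuousWithinAt
  have hQfi : ∀ f : ℝ → ℝ, Continuous f → ∀ s > 0,
      IntervalIntegrable (fun x => Q x * f x) volume 0 s := fun f hf s hs =>
    (hQi s hs).mul_continuousOn hf.continuousOn
  refine ⟨fun f s => (∫ x in (0:ℝ)..s, Q x * f x) / P s, ?_, ?_, ?_⟩
  · intro f hf s hs
    have h1 : HasDerivAt (fun u => ∫ x in (0:ℝ)..u, Q x * f x) (Q s * f s) s := by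
      have hc' : ContinuousOn (fun x => Q x * f x) (Ioi 0) := hQc.mul hf.continuousOn
      exact intervalIntegral.integral_hasDerivAt_right (hQfi f hf s hs)
        (ContinuousOn.stronglyMeasurableAtFilter isOpen_Ioi hc' s hs)
        (hc'.continuousAt (Ioi_mem_nhds hs))
    refine (h1.div (hP s hs).2 (hP s hs).1.ne').congr_deriv ?_
    have := (hP s hs).1
    simp only [hQ]
    field_simp
  · intro f hf s hs m hm
    have hPs := (hP s hs).1
    rw [abs_div, abs_of_pos hPs, div_le_iff₀ hPs, ← hQint s hs, ← intervalIntegral.integral_const_mul,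
      ← Real.norm_eq_abs]
    apply intervalIntegral.norm_integral_le_of_norm_le hs.le
    · apply Eventually.of_forall
      intro t ht
      rw [Real.norm_eq_abs, abs_mul, abs_of_nonneg (hQ0 t ht.1), mul_comm]
      exact mul_le_mul_of_nonneg_right (hm t ht) (hQ0 t ht.1)
    · exact (hQi s hs).const_mul m
  · intro f g hf hg s hs
    simp only
    rw [← sub_div, ← intervalIntegral.integral_sub (hQfi f hf s hs) (hQfi g hg s hs)]
    simp only [mul_sub]

theorem exist_reg {A B C : ℝ → ℝ} {M δ X : ℝ} (hA : ContinuousOn A (Ioi 0))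
    (hB : ContinuousOn B (Ici 0)) (hC : ContinuousOn C (Ici 0))
    (hA0 : ∀ x > 0, 0 < A x) (hB0 : ∀ x ≥ 0, 0 < B x) (hδ : 0 < δ)
    (hM : ∀ x ∈ Ioo 0 δ, A x ≤ M * x) (hX : 0 < X) :
    ∃ v v1 v2 : ℝ → ℝ, (∀ x ∈ Ioo 0 X, HasDerivAt v (v1 x) x ∧ HasDerivAt v1 (v2 x) x ∧
        A x * v2 x + B x * v1 x + C x * v x = 0) ∧
      Tendsto v (𝓝[>] 0) (𝓝 1) ∧ ∃ K, ∀ x ∈ Ioo 0 X, |v1 x| ≤ K := by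
  -- lower bound of B near 0
  have hMpos : 0 < M := by
    have h1 := hM (δ/2) ⟨half_pos hδ, by linarith⟩
    have h2 := hA0 (δ/2) (half_pos hδ)
    by_contra hcon
    push Not at hcon
    nlinarith
  obtain ⟨xm, hxm, hmin⟩ := isCompact_Icc.exists_isMinOn (nonempty_Icc.2 hδ.le)
    (hB.mono (fun x (hx : x ∈ Icc 0 δ) => hx.1))
  have hb0 := hB0 xm hxm.1
  set b0 := B xm
  have hq : ContinuousOn (fun x => B x / A x) (Ioi 0) :=
    (hB.mono Ioi_subset_Ici_self).div hA (fun x hx => (hA0 x hx).ne')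
  obtain ⟨J, hJd, hJb, hJs⟩ := avg (c := b0 / M) hq hδ (by positivity) (by
    intro x hx
    have h1 : b0 ≤ B x := hmin ⟨hx.1.le, hx.2.le⟩
    have h2 := hM x hx
    have h3 := hA0 x hx.1
    have hx0 := hx.1
    rw [div_div]
    exact div_le_div₀ (by linarith) h1 h3 h2) (fun x hx => (div_pos (hB0 x hx.le) (hA0 x hx)).le)
  -- clamp
  set cl : ℝ → ℝ := fun x => max 0 (min x X) with hcl
  have hclc : Continuous cl := by fun_prop
  have hcl0 : ∀ x, 0 ≤ cl x := fun x => le_max_left _ _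
  have hclX : ∀ x, cl x ≤ X := fun x => max_le hX.le (min_le_right _ _)
  have hclid : ∀ x ∈ Icc 0 X, cl x = x := by
    intro x hx; simp only [hcl]; rw [min_eq_left hx.2, max_eq_right hx.1]
  have hDc0 : ContinuousOn (fun x => C x / B x) (Ici 0) := hC.div hB (fun x hx => (hB0 x hx).ne')
  set D : ℝ → ℝ := fun x => C (cl x) / B (cl x) with hD
  have hDc : Continuous D := hDc0.comp_continuous hclc hcl0
  obtain ⟨K, hK⟩ : ∃ K, ∀ x ∈ Icc 0 X, |C x / B x| ≤ K := by
    obtain ⟨K, hK⟩ := isCompact_Icc.exists_bound_of_continuousOn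
      (hDc0.mono (fun x (hx : x ∈ Icc 0 X) => hx.1))
    exact ⟨K, hK⟩
  have hK0 : 0 ≤ K := (abs_nonneg _).trans (hK 0 ⟨le_rfl, hX.le⟩)
  have hDK : ∀ x, |D x| ≤ K := fun x => hK _ ⟨hcl0 x, hclX x⟩
  set L : ℝ := 2 * K + 1 with hL
  have hLpos : 0 < L := by positivity
  let fz : (BoundedContinuousFunction ℝ ℝ) → ℝ → ℝ := fun z σ => D σ * (Real.exp (L * σ) * z σ)
  have hfc : ∀ z, Continuous (fz z) := by
    intro z
    have := z.continuous
    simp only [fz]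
    fun_prop
  have hfb : ∀ f : ℝ → ℝ, Continuous f → ∀ m, 0 ≤ m → (∀ σ, |f σ| ≤ K * (Real.exp (L * σ) * m)) →
      ∀ s > 0, |J f s| ≤ K * (Real.exp (L * s) * m) := by
    intro f hf m hm h s hs
    apply hJb f hf s hs
    intro σ hσ
    apply (h σ).trans
    have := hσ.2
    gcongr
  have hfzb : ∀ z σ, |fz z σ| ≤ K * (Real.exp (L * σ) * ‖z‖) := by
    intro z σ
    simp only [fz]
    rw [abs_mul, abs_mul, abs_of_pos (Real.exp_pos _)]
    have h1 := hDK σ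
    have h2 : |z σ| ≤ ‖z‖ := z.norm_coe_le_norm σ
    gcongr
  have hJc : ∀ f, Continuous f → ContinuousOn (J f) (Ioi 0) := fun f hf s hs =>
    (hJd f hf s hs).continuousAt.continuousWithinAt
  have hJi : ∀ z x, 0 ≤ x → IntervalIntegrable (J (fz z)) volume 0 x := by
    intro z x hx
    rw [intervalIntegrable_iff_integrableOn_Ioc_of_le hx]
    have hg : IntegrableOn (fun s => K * (Real.exp (L * s) * ‖z‖)) (Ioc 0 x) := by
      apply Continuous.integrableOn_Ioc
      fun_prop
    apply hg.mono'
    · exact ((hJc _ (hfc z)).mono Ioc_subset_Ioi_self).aestronglyMeasurable measurableSet_Ioc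
    · apply (ae_restrict_iff' measurableSet_Ioc).2
      apply Eventually.of_forall
      intro s hs
      exact hfb _ (hfc z) ‖z‖ (norm_nonneg _) (hfzb z) s hs.1
  have hintexp : ∀ m x : ℝ, ∫ s in (0:ℝ)..x, K * (Real.exp (L * s) * m)
      = K * m / L * (Real.exp (L * x) - 1) := by
    intro m x
    have : ∀ s ∈ uIcc 0 x, HasDerivAt (fun s => K * m / L * Real.exp (L * s))
        (K * (Real.exp (L * s) * m)) s := by
      intro s _
      have h1 : HasDerivAt (fun s => L * s) L s := by simpa using (hasDerivAt_id s).const_mul L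
      refine (h1.exp.const_mul (K * m / L)).congr_deriv ?_
      field_simp
    rw [intervalIntegral.integral_eq_sub_of_hasDerivAt this
      (by apply Continuous.intervalIntegrable; fun_prop)]
    simp; ring
  have hbd : ∀ f : ℝ → ℝ, ∀ m x, 0 ≤ m → 0 ≤ x →
      (∀ s > 0, |f s| ≤ K * (Real.exp (L * s) * m)) →
      |∫ s in (0:ℝ)..x, f s| ≤ (1/2) * m * Real.exp (L * x) := by
    intro f m x hm hx h
    have h1 : ‖∫ s in (0:ℝ)..x, f s‖ ≤ ∫ s in (0:ℝ)..x, K * (Real.exp (L * s) * m) := by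
      apply intervalIntegral.norm_integral_le_of_norm_le hx
      · exact Eventually.of_forall (fun s hs => h s hs.1)
      · apply Continuous.intervalIntegrable; fun_prop
    rw [hintexp, Real.norm_eq_abs] at h1
    apply h1.trans
    have h2 : K * m / L ≤ 1/2 * m := by
      rw [div_le_iff₀ hLpos]; nlinarith
    have h3 := Real.exp_pos (L * x)
    have h4 : 0 ≤ K * m / L := by positivity
    nlinarith
  -- operator
  have hprim : ∀ z, Continuous (fun x => ∫ s in (0:ℝ)..cl x, J (fz z) s) := by
    intro z
    have : ContinuousOn (fun x => ∫ s in (0:ℝ)..x, J (fz z) s) (uIcc 0 X) := by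
      apply intervalIntegral.continuousOn_primitive_interval
      rw [uIcc_of_le hX.le, integrableOn_Icc_iff_integrableOn_Ioc,
        ← intervalIntegrable_iff_integrableOn_Ioc_of_le hX.le]
      exact hJi z X hX.le
    rw [uIcc_of_le hX.le] at this
    exact this.comp_continuous hclc (fun x => ⟨hcl0 x, hclX x⟩)
  let T0 : BoundedContinuousFunction ℝ ℝ → ℝ → ℝ := fun z x =>
    Real.exp (-(L * cl x)) * (1 - ∫ s in (0:ℝ)..cl x, J (fz z) s)
  have hT0c : ∀ z, Continuous (T0 z) := by
    intro z
    have := hprim z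
    simp only [T0]
    fun_prop
  have hee : ∀ x, Real.exp (-(L * x)) * Real.exp (L * x) = 1 := by
    intro x; rw [← Real.exp_add]; simp
  have hT0b : ∀ z x, ‖T0 z x‖ ≤ 1 + 1/2 * ‖z‖ := by
    intro z x
    simp only [T0]
    rw [norm_mul, Real.norm_eq_abs, Real.norm_eq_abs, abs_of_pos (Real.exp_pos _)]
    have h1 := hbd (J (fz z)) ‖z‖ (cl x) (norm_nonneg _) (hcl0 x)
      (hfb _ (hfc z) ‖z‖ (norm_nonneg _) (hfzb z))
    have h2 : |1 - ∫ s in (0:ℝ)..cl x, J (fz z) s| ≤ 1 + (1/2) * ‖z‖ * Real.exp (L * cl x) :=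
      (abs_sub _ _).trans (by rw [abs_one]; linarith)
    have h3 : Real.exp (-(L * cl x)) ≤ 1 := by
      rw [Real.exp_le_one_iff]; have := hcl0 x; nlinarith
    calc _ ≤ Real.exp (-(L * cl x)) * (1 + (1/2) * ‖z‖ * Real.exp (L * cl x)) := by gcongr
      _ = Real.exp (-(L * cl x)) + 1/2 * ‖z‖ * (Real.exp (-(L * cl x)) * Real.exp (L * cl x)) := by
        ring
      _ ≤ _ := by rw [hee]; linarith
  let T : BoundedContinuousFunction ℝ ℝ → BoundedContinuousFunction ℝ ℝ := fun z =>
    BoundedContinuousFunction.ofNormedAddCommGroup (T0 z) (hT0c z) _ (hT0b z)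
  have hTc : ContractingWith (1/2) T := by
    refine ⟨by rw [← NNReal.coe_lt_coe]; norm_num, LipschitzWith.of_dist_le_mul ?_⟩
    intro z w
    rw [BoundedContinuousFunction.dist_le (by positivity)]
    intro x
    show dist (T0 z x) (T0 w x) ≤ _
    have h1 := hbd (fun s => J (fz z) s - J (fz w) s) ‖z - w‖ (cl x) (norm_nonneg _) (hcl0 x) (by
      intro s hs
      rw [hJs _ _ (hfc z) (hfc w) s hs]
      apply hfb _ ((hfc z).sub (hfc w)) _ (norm_nonneg _) _ s hs
      intro σ
      have := hfzb (z - w) σ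
      simp only [fz, Pi.sub_apply] at this ⊢
      rw [← mul_sub, ← mul_sub]
      exact this)
    rw [intervalIntegral.integral_sub (hJi z _ (hcl0 x)) (hJi w _ (hcl0 x))] at h1
    simp only [T0]
    rw [Real.dist_eq, ← mul_sub, abs_mul, abs_of_pos (Real.exp_pos _), dist_eq_norm]
    rw [show (1 - ∫ s in (0:ℝ)..cl x, J (fz z) s) - (1 - ∫ s in (0:ℝ)..cl x, J (fz w) s)
      = -((∫ s in (0:ℝ)..cl x, J (fz z) s) - ∫ s in (0:ℝ)..cl x, J (fz w) s) by ring, abs_neg]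
    calc _ ≤ Real.exp (-(L * cl x)) * ((1/2) * ‖z - w‖ * Real.exp (L * cl x)) := by gcongr
      _ = 1/2 * ‖z - w‖ * (Real.exp (-(L * cl x)) * Real.exp (L * cl x)) := by ring
      _ ≤ _ := by rw [hee]; simp
  obtain ⟨z, hz⟩ : ∃ z, T z = z := ⟨_, hTc.fixedPoint_isFixedPt⟩
  have hzx : ∀ x, z x = T0 z x := by
    intro x
    conv_lhs => rw [← hz]
    rfl
  set v : ℝ → ℝ := fun x => Real.exp (L * x) * z x with hv
  have hvc : Continuous v := by
    have := z.continuous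
    fun_prop
  have hvx : ∀ x ∈ Icc 0 X, v x = 1 - ∫ s in (0:ℝ)..x, J (fz z) s := by
    intro x hx
    simp only [hv]
    rw [hzx]
    simp only [T0]
    rw [hclid x hx, ← mul_assoc, mul_comm (Real.exp _), hee, one_mul]
  refine ⟨v, fun x => - J (fz z) x, fun x => -(B x / A x * (fz z x - J (fz z) x)), ?_, ?_, ?_⟩
  · intro x hx
    refine ⟨?_, (hJd _ (hfc z) x hx.1).neg, ?_⟩
    · have h1 : HasDerivAt (fun x => 1 - ∫ s in (0:ℝ)..x, J (fz z) s) (-J (fz z) x) x := by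
        apply HasDerivAt.const_sub
        exact intervalIntegral.integral_hasDerivAt_right (hJi z x hx.1.le)
          (ContinuousOn.stronglyMeasurableAtFilter isOpen_Ioi (hJc _ (hfc z)) x hx.1)
          ((hJc _ (hfc z)).continuousAt (Ioi_mem_nhds hx.1))
      apply h1.congr_of_eventuallyEq
      filter_upwards [Ioo_mem_nhds hx.1 hx.2] with y hy using hvx y ⟨hy.1.le, hy.2.le⟩
    · have h1 := (hA0 x hx.1).ne'
      have h2 := (hB0 x hx.1.le).ne'
      have h3 : fz z x = C x / B x * v x := by
        simp only [fz, hD, hv]; rw [hclid x ⟨hx.1.le, hx.2.le⟩]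
      simp only [h3]
      field_simp
      ring
  · have h0 : v 0 = 1 := by
      rw [hvx 0 ⟨le_rfl, hX.le⟩]; simp
    rw [← h0]
    exact (hvc.tendsto 0).mono_left nhdsWithin_le_nhds
  · refine ⟨K * (Real.exp (L * X) * ‖z‖), ?_⟩
    intro x hx
    rw [abs_neg]
    apply (hfb _ (hfc z) ‖z‖ (norm_nonneg _) (hfzb z) x hx.1).trans
    have := hx.2.le
    gcongr

theorem cd1_facts {f : ℝ → ℝ} {c : ℝ} (h : ContDiffAt ℝ 1 f c) :
    (∀ᶠ x in 𝓝 c, HasDerivAt f (deriv f x) x) ∧ ContinuousAt (deriv f) c := by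
  constructor
  · filter_upwards [h.eventually (by simp)] with x hx
    exact (hx.differentiableAt one_ne_zero).hasDerivAt
  · have h1 : ContDiffAt ℝ 0 (fderiv ℝ f) c := h.fderiv_right (by simp)
    have : ContinuousAt (fun x => fderiv ℝ f x 1) c := h1.continuousAt.clm_apply continuousAt_const
    simpa using this

theorem q_lower {A B : ℝ → ℝ} {δ : ℝ} (hδ : 0 < δ) (hA : DifferentiableAt ℝ A 0)
    (hB : ContinuousAt B 0) (hA00 : A 0 = 0) (hApos : ∀ x ∈ Ioo 0 δ, 0 < A x) (hB0 : 0 < B 0) :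
    ∃ c > 0, ∃ δ' > 0, δ' ≤ δ ∧ ∀ x ∈ Ioo 0 δ', c / x ≤ B x / A x := by
  obtain ⟨M, hM, hMo⟩ := hA.hasDerivAt.isBigO_sub.exists_pos
  have h1 := hMo.bound
  have h2 : ∀ᶠ x in 𝓝 (0:ℝ), B 0 / 2 < B x := hB.eventually (lt_mem_nhds (by linarith))
  obtain ⟨d, hd, hdd⟩ := Metric.eventually_nhds_iff.1 (h1.and h2)
  refine ⟨B 0 / 2 / M, by positivity, min d δ, lt_min hd hδ, min_le_right _ _, ?_⟩
  intro x hx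
  have hx0 := hx.1
  obtain ⟨h3, h4⟩ := hdd (y := x) (by
    rw [Real.dist_eq, sub_zero, abs_of_pos hx.1]; exact hx.2.trans_le (min_le_left _ _))
  have h5 := hApos x ⟨hx.1, hx.2.trans_le (min_le_right _ _)⟩
  rw [hA00, sub_zero, sub_zero, Real.norm_eq_abs, Real.norm_eq_abs, abs_of_pos h5,
    abs_of_pos hx.1] at h3
  rw [div_div]
  exact div_le_div₀ (by linarith) h4.le h5 h3

theorem reg_lim {A B C v v1 v2 P : ℝ → ℝ} {δ v0 : ℝ} (hδ : 0 < δ)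
    (hA : ContDiffAt ℝ 1 A 0) (hB : ContDiffAt ℝ 1 B 0) (hC : ContDiffAt ℝ 1 C 0)
    (hA00 : A 0 = 0) (hApos : ∀ x ∈ Ioo 0 δ, 0 < A x) (hB0 : 0 < B 0)
    (hAB : 0 < deriv A 0 + B 0)
    (hv : ∀ x ∈ Ioo 0 δ, HasDerivAt v (v1 x) x ∧ HasDerivAt v1 (v2 x) x ∧
      A x * v2 x + B x * v1 x + C x * v x = 0)
    (hv0 : Tendsto v (𝓝[>] 0) (𝓝 v0))
    (hP : ∀ x ∈ Ioo 0 δ, 0 < P x ∧ HasDerivAt P (P x * (B x / A x)) x)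
    (hPv : Tendsto (fun x => P x * v1 x) (𝓝[>] 0) (𝓝 0)) :
    Tendsto v1 (𝓝[>] 0) (𝓝 (-(C 0 * v0) / B 0)) ∧
    Tendsto v2 (𝓝[>] 0) (𝓝 (-((deriv B 0 + C 0) * (-(C 0 * v0) / B 0) + deriv C 0 * v0) /
      (deriv A 0 + B 0))) := by
  obtain ⟨c, hc, δ1, hδ1, hδ1δ, hq⟩ := q_lower hδ (hA.differentiableAt one_ne_zero)
    hB.continuousAt hA00 hApos hB0
  have hP0 : Tendsto P (𝓝[>] 0) (𝓝 0) :=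
    P_upper hδ1 hc (fun x hx => hP x ⟨hx.1, hx.2.trans_le hδ1δ⟩) hq
  have hle : 𝓝[>] (0:ℝ) ≤ 𝓝 0 := nhdsWithin_le_nhds
  have hAt := hA.continuousAt.tendsto.mono_left hle
  have hBt := hB.continuousAt.tendsto.mono_left hle
  have hCt := hC.continuousAt.tendsto.mono_left hle
  have hv1 : Tendsto v1 (𝓝[>] 0) (𝓝 (-(C 0 * v0) / B 0)) :=
    core_lim (g := fun x => -(C x * v x)) hδ (fun x hx => (hApos x hx).ne') hBt hB0.ne'
      (hCt.mul hv0).neg (fun x hx => ⟨(hv x hx).2.1, by linarith [(hv x hx).2.2]⟩) hP hP0 hPv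
  refine ⟨hv1, ?_⟩
  obtain ⟨hAe, hAc⟩ := cd1_facts hA
  obtain ⟨hBe, hBc⟩ := cd1_facts hB
  obtain ⟨hCe, hCc⟩ := cd1_facts hC
  obtain ⟨d, hd, hdd⟩ := Metric.eventually_nhds_iff.1 (hAe.and (hBe.and hCe))
  set δ2 := min d δ
  have hδ2 : 0 < δ2 := lt_min hd hδ
  have hin : ∀ x ∈ Ioo 0 δ2, x ∈ Ioo 0 δ := fun x hx => ⟨hx.1, hx.2.trans_le (min_le_right _ _)⟩
  have hder : ∀ x ∈ Ioo 0 δ2, HasDerivAt A (deriv A x) x ∧ HasDerivAt B (deriv B x) x ∧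
      HasDerivAt C (deriv C x) x := by
    intro x hx
    apply hdd
    rw [Real.dist_eq, sub_zero, abs_of_pos hx.1]; exact hx.2.trans_le (min_le_left _ _)
  have hAct := hAc.tendsto.mono_left hle
  have hBct := hBc.tendsto.mono_left hle
  have hCct := hCc.tendsto.mono_left hle
  refine core_lim (A := A) (B := fun x => deriv A x + B x)
    (g := fun x => -((deriv B x + C x) * v1 x + deriv C x * v x)) (P := fun x => P x * A x)
    (w' := fun x => (-((deriv B x + C x) * v1 x + deriv C x * v x) - (deriv A x + B x) * v2 x) / A x)
    hδ2 (fun x hx => (hApos x (hin x hx)).ne') (hAct.add hBt) hAB.ne'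
    (((hBct.add hCt).mul hv1).add (hCct.mul hv0)).neg ?_ ?_ ?_ ?_
  · intro x hx
    have hA0 := (hApos x (hin x hx)).ne'
    refine ⟨?_, by field_simp; ring⟩
    obtain ⟨h1, h2, h3⟩ := hder x hx
    obtain ⟨h4, h5, h6⟩ := hv x (hin x hx)
    have h7 : HasDerivAt (fun x => -(B x * v1 x + C x * v x) / A x) _ x :=
      ((h2.mul h5).add (h3.mul h4)).neg.div h1 hA0
    have h8 : v2 =ᶠ[𝓝 x] (fun x => -(B x * v1 x + C x * v x) / A x) := by
      filter_upwards [Ioo_mem_nhds hx.1 hx.2] with y hy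
      have := (hApos y (hin y hy)).ne'
      rw [eq_div_iff this]
      linarith [(hv y (hin y hy)).2.2]
    refine (h7.congr_of_eventuallyEq h8).congr_deriv ?_
    have h9 : B x * v1 x + C x * v x = - (A x * v2 x) := by linarith
    simp only [Pi.add_apply, Pi.mul_apply, Pi.neg_apply]
    rw [h9]
    field_simp
    ring
  · intro x hx
    have hA0 := hApos x (hin x hx)
    obtain ⟨h1, h2⟩ := hP x (hin x hx)
    refine ⟨mul_pos h1 hA0, (h2.mul (hder x hx).1).congr_deriv ?_⟩
    field_simp
    ring
  · simpa using hP0.mul hAt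
  · have : Tendsto (fun x => P x * -(B x * v1 x + C x * v x)) (𝓝[>] 0)
        (𝓝 (0 * -(B 0 * (-(C 0 * v0) / B 0) + C 0 * v0))) :=
      hP0.mul ((hBt.mul hv1).add (hCt.mul hv0)).neg
    rw [zero_mul] at this
    refine this.congr' ?_
    filter_upwards [Ioo_mem_nhdsGT hδ] with x hx
    rw [mul_assoc]
    congr 1
    linarith [(hv x hx).2.2]

theorem reg_lim_bdd {A B C v v1 v2 : ℝ → ℝ} {δ v0 K : ℝ} (hδ : 0 < δ)
    (hA : ContDiffAt ℝ 1 A 0) (hB : ContDiffAt ℝ 1 B 0) (hC : ContDiffAt ℝ 1 C 0)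
    (hAcont : ContinuousOn A (Ioi 0)) (hBcont : ContinuousOn B (Ioi 0))
    (hA00 : A 0 = 0) (hApos : ∀ x > 0, 0 < A x) (hB0 : 0 < B 0)
    (hAB : 0 < deriv A 0 + B 0)
    (hv : ∀ x ∈ Ioo 0 δ, HasDerivAt v (v1 x) x ∧ HasDerivAt v1 (v2 x) x ∧
      A x * v2 x + B x * v1 x + C x * v x = 0)
    (hv0 : Tendsto v (𝓝[>] 0) (𝓝 v0)) (hK : ∀ x ∈ Ioo 0 δ, |v1 x| ≤ K) :
    Tendsto v1 (𝓝[>] 0) (𝓝 (-(C 0 * v0) / B 0)) ∧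
    Tendsto v2 (𝓝[>] 0) (𝓝 (-((deriv B 0 + C 0) * (-(C 0 * v0) / B 0) + deriv C 0 * v0) /
      (deriv A 0 + B 0))) := by
  obtain ⟨P, hP⟩ := exP (q := fun x => B x / A x)
    (hBcont.div hAcont (fun x hx => (hApos x hx).ne'))
  obtain ⟨c, hc, δ1, hδ1, hδ1δ, hq⟩ := q_lower hδ (hA.differentiableAt one_ne_zero)
    hB.continuousAt hA00 (fun x hx => hApos x hx.1) hB0
  have hP0 : Tendsto P (𝓝[>] 0) (𝓝 0) :=
    P_upper hδ1 hc (fun x hx => hP x hx.1) hq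
  refine reg_lim hδ hA hB hC hA00 (fun x hx => hApos x hx.1) hB0 hAB hv hv0
    (fun x hx => hP x hx.1) ?_
  apply squeeze_zero_norm' (a := fun x => |P x| * K)
  · filter_upwards [Ioo_mem_nhdsGT hδ] with x hx
    rw [norm_mul]
    exact mul_le_mul_of_nonneg_left (hK x hx) (abs_nonneg _)
  · simpa using hP0.abs.mul_const K

theorem glue1 {f f1 : ℝ → ℝ} {a b c l : ℝ} (hc : c ∈ Ioo a b)
    (h : ∀ x ∈ Ioo a b, x ≠ c → HasDerivAt f (f1 x) x) (hf : ContinuousAt f c)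
    (hl : Tendsto f1 (𝓝[≠] c) (𝓝 l)) : HasDerivAt f l c := by
  have h1 : HasDerivWithinAt f l (Ici c) c := by
    apply hasDerivWithinAt_Ici_of_tendsto_deriv (s := Ioo c b)
    · exact fun x hx => (h x ⟨hc.1.trans hx.1, hx.2⟩ hx.1.ne').differentiableAt.differentiableWithinAt
    · exact hf.continuousWithinAt
    · exact Ioo_mem_nhdsGT hc.2
    · apply (hl.mono_left (nhdsWithin_mono c (fun x (hx : c < x) => hx.ne'))).congr'
      filter_upwards [Ioo_mem_nhdsGT hc.2] with x hx
      exact (h x ⟨hc.1.trans hx.1, hx.2⟩ hx.1.ne').deriv.symm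
  have h2 : HasDerivWithinAt f l (Iic c) c := by
    apply hasDerivWithinAt_Iic_of_tendsto_deriv (s := Ioo a c)
    · exact fun x hx => (h x ⟨hx.1, hx.2.trans hc.2⟩ hx.2.ne).differentiableAt.differentiableWithinAt
    · exact hf.continuousWithinAt
    · exact Ioo_mem_nhdsLT hc.1
    · apply (hl.mono_left (nhdsWithin_mono c (fun x (hx : x < c) => hx.ne))).congr'
      filter_upwards [Ioo_mem_nhdsLT hc.1] with x hx
      exact (h x ⟨hx.1, hx.2.trans hc.2⟩ hx.2.ne).deriv.symm
  have := h2.union h1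
  rw [Iic_union_Ici] at this
  exact this.hasDerivAt univ_mem

theorem glue {f f1 f2 : ℝ → ℝ} {a b c l0 l1 l2 : ℝ} (hc : c ∈ Ioo a b)
    (h : ∀ x ∈ Ioo a b, x ≠ c → HasDerivAt f (f1 x) x ∧ HasDerivAt f1 (f2 x) x ∧ ContinuousAt f2 x)
    (h0 : Tendsto f (𝓝[≠] c) (𝓝 l0)) (h1 : Tendsto f1 (𝓝[≠] c) (𝓝 l1))
    (h2 : Tendsto f2 (𝓝[≠] c) (𝓝 l2)) :
    ∀ x ∈ Ioo a b, HasDerivAt (Function.update f c l0) (Function.update f1 c l1 x) x ∧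
      HasDerivAt (Function.update f1 c l1) (Function.update f2 c l2 x) x ∧
      ContinuousAt (Function.update f2 c l2) x := by
  have hu : ∀ (g : ℝ → ℝ) (l : ℝ) (x : ℝ), x ≠ c → Function.update g c l =ᶠ[𝓝 x] g := by
    intro g l x hx
    filter_upwards [isOpen_ne.mem_nhds hx] with y hy
    exact Function.update_of_ne hy _ _
  have hut : ∀ (g : ℝ → ℝ) (l l' : ℝ), Tendsto g (𝓝[≠] c) (𝓝 l') →
      Tendsto (Function.update g c l) (𝓝[≠] c) (𝓝 l') := by
    intro g l l' hg
    apply hg.congr'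
    filter_upwards [self_mem_nhdsWithin] with y hy
    exact (Function.update_of_ne hy _ _).symm
  have huc : ∀ (g : ℝ → ℝ) (l : ℝ), Tendsto g (𝓝[≠] c) (𝓝 l) →
      ContinuousAt (Function.update g c l) c := by
    intro g l hg
    exact continuousAt_update_same.2 hg
  intro x hx
  by_cases hxc : x = c
  · subst hxc
    simp only [Function.update_self]
    refine ⟨glue1 (f1 := Function.update f1 x l1) hx ?_ (huc _ _ h0) (hut _ _ _ h1),
      glue1 (f1 := Function.update f2 x l2) hx ?_ (huc _ _ h1) (hut _ _ _ h2), huc _ _ h2⟩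
    · intro y hy hne
      rw [Function.update_of_ne hne]
      exact (h y hy hne).1.congr_of_eventuallyEq (hu _ _ _ hne)
    · intro y hy hne
      rw [Function.update_of_ne hne]
      exact (h y hy hne).2.1.congr_of_eventuallyEq (hu _ _ _ hne)
  · rw [Function.update_of_ne hxc, Function.update_of_ne hxc]
    obtain ⟨h3, h4, h5⟩ := h x hx hxc
    exact ⟨h3.congr_of_eventuallyEq (hu _ _ _ hxc), h4.congr_of_eventuallyEq (hu _ _ _ hxc),
      h5.congr (hu _ _ _ hxc).symm⟩

theorem cd2 {f f1 f2 : ℝ → ℝ} {s : Set ℝ} (hs : IsOpen s)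
    (h : ∀ x ∈ s, HasDerivAt f (f1 x) x ∧ HasDerivAt f1 (f2 x) x ∧ ContinuousAt f2 x) :
    ContDiffOn ℝ 2 f s := by
  have e : (2 : WithTop ℕ∞) = 1 + 1 := by norm_num
  have e1 : (1 : WithTop ℕ∞) = 0 + 1 := by norm_num
  rw [e, contDiffOn_succ_iff_deriv_of_isOpen hs]
  refine ⟨fun x hx => (h x hx).1.differentiableAt.differentiableWithinAt, by simp, ?_⟩
  have : ContDiffOn ℝ 1 f1 s := by
    rw [e1, contDiffOn_succ_iff_deriv_of_isOpen hs]
    refine ⟨fun x hx => (h x hx).2.1.differentiableAt.differentiableWithinAt, by simp, ?_⟩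
    rw [contDiffOn_zero]
    intro x hx
    exact ((h x hx).2.2.continuousWithinAt).congr (fun y hy => (h y hy).2.1.deriv)
      (h x hx).2.1.deriv
  exact this.congr (fun y hy => (h y hy).1.deriv)

theorem nolog_aux {u u1 : ℝ → ℝ} {δ K m : ℝ} (ν : ℕ) (hδ : 0 < δ)
    (hu : ∀ r ∈ Ioo 0 δ, HasDerivAt u (u1 r) r) (hK : ∀ r ∈ Ioo 0 δ, |u r| ≤ K)
    (hm : Tendsto (fun r => r ^ (ν + 1) * u1 r) (𝓝[>] 0) (𝓝 m)) (h : 0 < m) : False := by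
  have h1 : ∀ᶠ r in 𝓝[>] (0:ℝ), m / 2 < r ^ (ν + 1) * u1 r :=
    hm.eventually (lt_mem_nhds (by linarith))
  obtain ⟨d, hd, hdd⟩ := mem_nhdsGT_iff_exists_Ioo_subset.1 h1
  have hd : 0 < d := hd
  set e := min (min d 1) δ
  have he : 0 < e := lt_min (lt_min hd one_pos) hδ
  have hin : ∀ r ∈ Ioo 0 e, r ∈ Ioo 0 d ∧ r < 1 ∧ r ∈ Ioo 0 δ := by
    intro r hr
    have h2 := lt_min_iff.1 hr.2
    have h3 := lt_min_iff.1 h2.1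
    exact ⟨⟨hr.1, h3.1⟩, h3.2, ⟨hr.1, h2.2⟩⟩
  have hmono : MonotoneOn (fun r => u r - m / 2 * Real.log r) (Ioo 0 e) := by
    apply mono_of_hd (f' := fun r => u1 r - m / 2 * r⁻¹)
    · intro r hr
      exact (hu r (hin r hr).2.2).sub ((Real.hasDerivAt_log hr.1.ne').const_mul _)
    · intro r hr
      have h2 : m / 2 < r ^ (ν + 1) * u1 r := hdd (hin r hr).1
      have hr0 := hr.1
      have h3 : 0 < r ^ (ν + 1) := by positivity
      have h4 : 0 < u1 r := by
        by_contra hcon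
        push Not at hcon
        have := mul_nonpos_of_nonneg_of_nonpos h3.le hcon
        linarith
      have h5 : r ^ (ν + 1) ≤ r := by
        rw [pow_succ]
        have : r ^ ν ≤ 1 := pow_le_one₀ hr0.le (hin r hr).2.1.le
        nlinarith
      have h6 : m / 2 ≤ r * u1 r := by nlinarith
      rw [sub_nonneg, ← div_eq_mul_inv, div_le_iff₀ hr0]
      linarith
  have he2 : e / 2 ∈ Ioo 0 e := ⟨by linarith, by linarith⟩
  have hlog := Real.tendsto_log_nhdsGT_zero
  set S := u (e/2) - m / 2 * Real.log (e/2)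
  have hev : ∀ᶠ r in 𝓝[>] (0:ℝ), Real.log r < -((S + K) / (m / 2)) - 1 :=
    hlog.eventually (eventually_lt_atBot _)
  obtain ⟨r, hr1, hr2⟩ := (hev.and (Ioo_mem_nhdsGT (half_pos he))).exists
  have hre : r ∈ Ioo 0 e := ⟨hr2.1, by linarith [hr2.2]⟩
  have h7 : u r - m / 2 * Real.log r ≤ S := hmono hre he2 hr2.2.le
  have h8 := (abs_le.1 (hK r (hin r hre).2.2)).1
  have h9 : (m / 2) * ((S + K) / (m / 2)) = S + K := by field_simp
  nlinarith

theorem nolog {u u1 : ℝ → ℝ} {δ K m : ℝ} (ν : ℕ) (hδ : 0 < δ)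
    (hu : ∀ r ∈ Ioo 0 δ, HasDerivAt u (u1 r) r) (hK : ∀ r ∈ Ioo 0 δ, |u r| ≤ K)
    (hm : Tendsto (fun r => r ^ (ν + 1) * u1 r) (𝓝[>] 0) (𝓝 m)) : m = 0 := by
  rcases lt_trichotomy m 0 with h | h | h
  · exfalso
    refine nolog_aux (u := fun r => -u r) (u1 := fun r => -u1 r) (m := -m) ν hδ
      (fun r hr => (hu r hr).neg) (fun r hr => by rw [abs_neg]; exact hK r hr) ?_ (by linarith)
    refine hm.neg.congr (fun r => by ring)
  · exact h
  · exact (nolog_aux ν hδ hu hK hm h).elim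

theorem origin {u u1 u2 : ℝ → ℝ} {ρ δ K μ : ℝ} (ν : ℕ) (hρ : 0 < ρ) (hδ : 0 < δ)
    (hu : ∀ r ∈ Ioo 0 ρ, HasDerivAt u (u1 r) r ∧ HasDerivAt u1 (u2 r) r ∧
      u2 r + u1 r / r - (ν:ℝ) ^ 2 / r ^ 2 * u r = μ * u r)
    (hK : ∀ r ∈ Ioo 0 δ, |u r| ≤ K) :
    ∃ G : ℝ → ℝ, ContDiffOn ℝ 2 G (Ioo (-1) 1) ∧
      ∃ d > 0, ∀ r ∈ Ioo 0 d, u r = r ^ ν * G (r ^ 2) := by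
  obtain ⟨G, G1, G2, hG, hG0, KG, hKG⟩ := exist_reg (A := fun x => x) (B := fun _ => (ν:ℝ) + 1)
    (C := fun _ => -(μ / 4)) (M := 1) (δ := 1) (X := 1) continuousOn_id continuousOn_const
    continuousOn_const (fun x hx => hx) (fun x _ => by positivity) one_pos
    (fun x _ => by linarith) one_pos
  obtain ⟨hG1, hG2⟩ := reg_lim_bdd (A := fun x => x) (B := fun _ => (ν:ℝ) + 1)
    (C := fun _ => -(μ / 4)) one_pos contDiffAt_id contDiffAt_const contDiffAt_const
    continuousOn_id continuousOn_const rfl (fun x hx => hx) (by positivity)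
    (by simp; positivity) hG hG0 hKG
  generalize hl1 : -(-(μ / 4) * 1) / ((ν:ℝ) + 1) = l1 at hG1
  obtain ⟨l2, hG2⟩ : ∃ l, Tendsto G2 (𝓝[>] 0) (𝓝 l) := ⟨_, hG2⟩
  -- extension
  set f : ℝ → ℝ := fun y => if 0 < y then G y else 1 + l1 * y + l2 / 2 * y ^ 2 with hf
  set f1 : ℝ → ℝ := fun y => if 0 < y then G1 y else l1 + l2 * y with hf1
  set f2 : ℝ → ℝ := fun y => if 0 < y then G2 y else l2 with hf2
  have epos : ∀ (g h : ℝ → ℝ) (x : ℝ), 0 < x → (fun y => if 0 < y then g y else h y) =ᶠ[𝓝 x] g := by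
    intro g h x hx
    filter_upwards [Ioi_mem_nhds hx] with y hy
    rw [if_pos (show 0 < y from hy)]
  have eneg : ∀ (g h : ℝ → ℝ) (x : ℝ), x < 0 → (fun y => if 0 < y then g y else h y) =ᶠ[𝓝 x] h := by
    intro g h x hx
    filter_upwards [Iio_mem_nhds hx] with y hy
    rw [if_neg (not_lt.2 (show y < 0 from hy).le)]
  have hlim : ∀ (g h : ℝ → ℝ) (l : ℝ), Tendsto g (𝓝[>] 0) (𝓝 l) → ContinuousAt h 0 → h 0 = l →
      Tendsto (fun y => if 0 < y then g y else h y) (𝓝[≠] 0) (𝓝 l) := by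
    intro g h l h1 h2 h3
    rw [← Iio_union_Ioi, nhdsWithin_union, tendsto_sup]
    constructor
    · rw [← h3]
      apply (h2.tendsto.mono_left nhdsWithin_le_nhds).congr'
      filter_upwards [self_mem_nhdsWithin] with y hy
      rw [if_neg (not_lt.2 (show y < 0 from hy).le)]
    · apply h1.congr'
      filter_upwards [self_mem_nhdsWithin] with y hy
      rw [if_pos (show 0 < y from hy)]
  have hGt := glue (f := f) (f1 := f1) (f2 := f2) (a := -1) (b := 1) (c := 0) (l0 := 1) (l1 := l1)
    (l2 := l2) ⟨by norm_num, one_pos⟩ (by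
      intro x hx hne
      rcases lt_or_gt_of_ne hne with h | h
      · have e1 : f1 x = l1 + l2 * x := by simp only [hf1]; rw [if_neg (not_lt.2 h.le)]
        have e2 : f2 x = l2 := by simp only [hf2]; rw [if_neg (not_lt.2 h.le)]
        rw [e1, e2]
        refine ⟨?_, ?_, ?_⟩
        · refine HasDerivAt.congr_of_eventuallyEq ?_ (eneg _ _ x h)
          have h1 : HasDerivAt (fun y : ℝ => y ^ 2) (2 * x) x := by simpa using hasDerivAt_pow 2 x
          refine ((((hasDerivAt_id x).const_mul l1).const_add 1).add
            (h1.const_mul (l2 / 2))).congr_deriv ?_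
          ring
        · refine HasDerivAt.congr_of_eventuallyEq ?_ (eneg _ _ x h)
          refine (((hasDerivAt_id x).const_mul l2).const_add l1).congr_deriv ?_
          ring
        · exact continuousAt_const.congr (eneg _ (fun _ => l2) x h).symm
      · have e1 : f1 x = G1 x := by simp only [hf1]; rw [if_pos h]
        have e2 : f2 x = G2 x := by simp only [hf2]; rw [if_pos h]
        rw [e1, e2]
        obtain ⟨g1, g2, g3⟩ := hG x ⟨h, hx.2⟩
        refine ⟨g1.congr_of_eventuallyEq (epos _ _ x h), g2.congr_of_eventuallyEq (epos _ _ x h), ?_⟩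
        refine ContinuousAt.congr ?_ (epos _ (fun _ => l2) x h).symm
        have hc : ContinuousAt (fun y => -(((ν:ℝ) + 1) * G1 y + -(μ / 4) * G y) / y) x :=
          ((continuousAt_const.mul g2.continuousAt).add
            (continuousAt_const.mul g1.continuousAt)).neg.div continuousAt_id h.ne'
        apply hc.congr
        filter_upwards [Ioo_mem_nhds h hx.2] with y hy
        have hy0 := hy.1.ne'
        rw [div_eq_iff hy0]
        linarith [(hG y hy).2.2])
    (hlim G _ 1 hG0 (by fun_prop) (by simp)) (hlim G1 _ l1 hG1 (by fun_prop) (by simp))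
    (hlim G2 _ l2 hG2 (by fun_prop) rfl)
  have hGC : ContDiffOn ℝ 2 (Function.update f 0 1) (Ioo (-1) 1) := cd2 isOpen_Ioo hGt
  -- Wronskian
  set e := min (min ρ 1) δ
  have he : 0 < e := lt_min (lt_min hρ one_pos) hδ
  have hin : ∀ r ∈ Ioo 0 e, r ∈ Ioo 0 ρ ∧ r ^ 2 ∈ Ioo 0 1 ∧ r ∈ Ioo 0 δ := by
    intro r hr
    have h2 := lt_min_iff.1 hr.2
    have h3 := lt_min_iff.1 h2.1
    have hr0 := hr.1
    exact ⟨⟨hr.1, h3.1⟩, ⟨by positivity, by nlinarith⟩, ⟨hr.1, h2.2⟩⟩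
  have hsq : ∀ r : ℝ, HasDerivAt (fun r : ℝ => r ^ 2) (2 * r) r := fun r => by
    simpa using hasDerivAt_pow 2 r
  have hpow : ∀ (n : ℕ) (r : ℝ), r ≠ 0 → HasDerivAt (fun r : ℝ => r ^ n) (n * r ^ n / r) r := by
    intro n r hr
    refine (hasDerivAt_pow n r).congr_deriv ?_
    rcases n with _ | n
    · simp
    · simp only [Nat.add_sub_cancel]; field_simp; rw [pow_succ]
  have hGd : ∀ r ∈ Ioo 0 e, HasDerivAt (fun r => G (r ^ 2)) (G1 (r ^ 2) * (2 * r)) r := by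
    intro r hr
    exact HasDerivAt.comp (h := fun s : ℝ => s ^ 2) r (hG _ (hin r hr).2.1).1 (hsq r)
  have hG1d : ∀ r ∈ Ioo 0 e, HasDerivAt (fun r => G1 (r ^ 2)) (G2 (r ^ 2) * (2 * r)) r := by
    intro r hr
    exact HasDerivAt.comp (h := fun s : ℝ => s ^ 2) r (hG _ (hin r hr).2.1).2.1 (hsq r)
  set R : ℝ → ℝ := fun r => ν * (r ^ ν * G (r ^ 2)) + 2 * (r ^ (ν + 2) * G1 (r ^ 2)) with hR
  set W : ℝ → ℝ := fun r => u r * R r - r ^ (ν + 1) * u1 r * G (r ^ 2) with hW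
  have hWd : ∀ r ∈ Ioo 0 e, HasDerivAt W 0 r := by
    intro r hr
    have hr0 := hr.1.ne'
    obtain ⟨q1, q2, q3⟩ := hu r (hin r hr).1
    have hRd := (((hpow ν r hr0).mul (hGd r hr)).const_mul (ν:ℝ)).add
      (((hpow (ν + 2) r hr0).mul (hG1d r hr)).const_mul 2)
    have hWd := (q1.mul hRd).sub (((hpow (ν + 1) r hr0).mul q2).mul (hGd r hr))
    refine hWd.congr_deriv ?_
    have g3 := (hG _ (hin r hr).2.1).2.2
    simp only [Pi.add_apply, Pi.mul_apply]
    generalize u r = a at *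
    generalize u1 r = a1 at *
    generalize u2 r = a2 at *
    generalize G (r ^ 2) = b at *
    generalize G1 (r ^ 2) = b1 at *
    generalize G2 (r ^ 2) = b2 at *
    have q3' : a2 = μ * a + (ν:ℝ) ^ 2 / r ^ 2 * a - a1 / r := by linarith
    have g3' : b2 = (μ / 4 * b - ((ν:ℝ) + 1) * b1) / r ^ 2 := by
      rw [eq_div_iff (by positivity)]; linarith
    subst q3' g3'
    push_cast
    field_simp
    rw [pow_succ]
    ring
  obtain ⟨W0, hW0⟩ : ∃ W0, ∀ r ∈ Ioo 0 e, W r = W0 := by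
    refine ⟨W (e/2), fun r hr => ?_⟩
    exact isOpen_Ioo.is_const_of_deriv_eq_zero isPreconnected_Ioo
      (fun x hx => (hWd x hx).differentiableAt.differentiableWithinAt)
      (fun x hx => (hWd x hx).deriv) hr ⟨by linarith, by linarith⟩
  have hle : 𝓝[>] (0:ℝ) ≤ 𝓝 0 := nhdsWithin_le_nhds
  have htsq : Tendsto (fun r : ℝ => r ^ 2) (𝓝[>] 0) (𝓝[>] 0) := by
    apply tendsto_nhdsWithin_of_tendsto_nhds_of_eventually_within
    · have : Tendsto (fun r : ℝ => r ^ 2) (𝓝 0) (𝓝 (0 ^ 2)) := (continuous_pow 2).tendsto 0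
      rw [zero_pow two_ne_zero] at this
      exact this.mono_left hle
    · filter_upwards [self_mem_nhdsWithin] with r hr
      exact pow_pos (show 0 < r from hr) 2
  have hGr := hG0.comp htsq
  have hG1r := hG1.comp htsq
  have hpt : ∀ n : ℕ, Tendsto (fun r : ℝ => r ^ n) (𝓝[>] 0) (𝓝 (0 ^ n)) := fun n =>
    ((continuous_pow n).tendsto 0).mono_left hle
  have hRt : Tendsto R (𝓝[>] 0) (𝓝 0) := by
    have h1 : Tendsto R (𝓝[>] 0) (𝓝 (ν * (0 ^ ν * 1) + 2 * (0 ^ (ν + 2) * l1))) :=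
      ((((hpt ν).mul hGr).const_mul (ν:ℝ))).add (((hpt (ν + 2)).mul hG1r).const_mul 2)
    have h2 : (ν:ℝ) * (0 ^ ν * 1) + 2 * (0 ^ (ν + 2) * l1) = 0 := by
      rcases ν with _ | n
      · simp
      · simp
    rwa [h2] at h1
  have huR : Tendsto (fun r => u r * R r) (𝓝[>] 0) (𝓝 0) := by
    apply squeeze_zero_norm' (a := fun r => K * |R r|)
    · filter_upwards [Ioo_mem_nhdsGT hδ] with r hr
      rw [norm_mul]
      exact mul_le_mul_of_nonneg_right (hK r hr) (abs_nonneg _)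
    · simpa using hRt.abs.const_mul K
  have hlimu : Tendsto (fun r => r ^ (ν + 1) * u1 r) (𝓝[>] 0) (𝓝 (-W0)) := by
    have h1 : Tendsto (fun r => (u r * R r - W0) / G (r ^ 2)) (𝓝[>] 0) (𝓝 ((0 - W0) / 1)) :=
      (huR.sub_const W0).div hGr one_ne_zero
    rw [zero_sub, div_one] at h1
    apply h1.congr'
    filter_upwards [Ioo_mem_nhdsGT he, hGr.eventually_ne one_ne_zero] with r hr hne
    have h2 := hW0 r hr
    simp only [Function.comp] at hne
    rw [div_eq_iff hne]
    simp only [hW] at h2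
    linarith
  have hWz : W0 = 0 := by
    have := nolog ν he (fun r hr => (hu r (hin r hr).1).1) (fun r hr => hK r (hin r hr).2.2) hlimu
    linarith
  obtain ⟨d, hd, hdd⟩ := mem_nhdsGT_iff_exists_Ioo_subset.1
    (hGr.eventually_ne one_ne_zero)
  have hd : 0 < d := hd
  set d' := min d e
  have hd' : 0 < d' := lt_min hd he
  have hin' : ∀ r ∈ Ioo 0 d', G (r ^ 2) ≠ 0 ∧ r ∈ Ioo 0 e := by
    intro r hr
    have h2 := lt_min_iff.1 hr.2
    exact ⟨hdd ⟨hr.1, h2.1⟩, hr.1, h2.2⟩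
  have hquot : ∀ r ∈ Ioo 0 d', HasDerivAt (fun r => u r / (r ^ ν * G (r ^ 2))) 0 r := by
    intro r hr
    obtain ⟨h1, h2⟩ := hin' r hr
    have hr0 := hr.1.ne'
    have h3 := hW0 r h2
    rw [hWz] at h3
    have h4 : r ^ ν * G (r ^ 2) ≠ 0 := mul_ne_zero (pow_ne_zero _ hr0) h1
    refine ((hu r (hin r h2).1).1.div ((hpow ν r hr0).mul (hGd r h2)) h4).congr_deriv ?_
    simp only [Pi.mul_apply]
    rw [div_eq_zero_iff]
    left
    simp only [hW, hR] at h3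
    have h5 : u r * (↑ν * r ^ ν / r * G (r ^ 2) + r ^ ν * (G1 (r ^ 2) * (2 * r))) * r =
      u r * (ν * (r ^ ν * G (r ^ 2)) + 2 * (r ^ (ν + 2) * G1 (r ^ 2))) := by
      field_simp
      rw [pow_succ]
      ring
    have h6 : (u1 r * (r ^ ν * G (r ^ 2)) -
      u r * (↑ν * r ^ ν / r * G (r ^ 2) + r ^ ν * (G1 (r ^ 2) * (2 * r)))) * r = 0 := by
      rw [sub_mul, h5]
      have : u1 r * (r ^ ν * G (r ^ 2)) * r = r ^ (ν + 1) * u1 r * G (r ^ 2) := by ring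
      rw [this]; linarith
    exact (mul_eq_zero.1 h6).resolve_right hr0
  set k := u (d'/2) / ((d'/2) ^ ν * G ((d'/2) ^ 2)) with hk
  refine ⟨fun y => k * Function.update f 0 1 y, contDiffOn_const.mul hGC, d', hd', ?_⟩
  intro r hr
  have h1 : u r / (r ^ ν * G (r ^ 2)) = k :=
    isOpen_Ioo.is_const_of_deriv_eq_zero isPreconnected_Ioo
      (f := fun r => u r / (r ^ ν * G (r ^ 2)))
      (fun x hx => (hquot x hx).differentiableAt.differentiableWithinAt)
      (fun x hx => (hquot x hx).deriv) hr ⟨by linarith, by linarith⟩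
  have hr0 := hr.1
  rw [div_eq_iff (mul_ne_zero (pow_ne_zero _ hr0.ne') (hin' r hr).1)] at h1
  have hr2 : 0 < r ^ 2 := by positivity
  rw [h1]
  show _ = r ^ ν * (k * Function.update f 0 1 (r ^ 2))
  rw [Function.update_of_ne hr2.ne']
  simp only [hf]
  rw [if_pos hr2]
  ring

noncomputable def T0 (τ : ℝ) : ℝ := π/2 + τ * Real.sqrt (1 - τ^2) + Real.arcsin τ
noncomputable def T12 (τ : ℝ) : ℝ := -(2/3) * (1 - τ^2) ^ ((3:ℝ)/2)
noncomputable def T2 (τ : ℝ) : ℝ :=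
  π/8 + (1/12) * (τ * Real.sqrt (1 - τ^2) * (5 - 2*τ^2) + 3 * Real.arcsin τ)
noncomputable def T22 (τ : ℝ) : ℝ :=
  π/8 + (1/4) * (τ * Real.sqrt (1 - τ^2) * (2*τ^2 - 1) + Real.arcsin τ)
noncomputable def T3 (τ : ℝ) : ℝ := -(2/15) * (1 - τ^2) ^ ((5:ℝ)/2)
noncomputable def T32 (τ : ℝ) : ℝ := -(2/15) * (2 + 3*τ^2) * (1 - τ^2) ^ ((3:ℝ)/2)
noncomputable def TD (τ : ℝ) : ℝ := (T12 τ)^2 - T22 τ * T0 τ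
noncomputable def Q11 (τ : ℝ) : ℝ := (1/2) * (T22 τ * T2 τ - T3 τ * T12 τ) / TD τ
noncomputable def Q22 (τ : ℝ) : ℝ := (1/2) * ((T22 τ)^2 - T32 τ * T12 τ) / TD τ
noncomputable def Q2 (τ : ℝ) : ℝ := T12 τ / TD τ
noncomputable def cl (y : ℝ) : ℝ := max 0 (min y 1)

theorem cl_mem (y : ℝ) : cl y ∈ Icc (0:ℝ) 1 :=
  ⟨le_max_left _ _, max_le zero_le_one (min_le_right _ _)⟩

theorem cl_of_mem {y : ℝ} (h : y ∈ Icc (0:ℝ) 1) : cl y = y := by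
  rw [cl, min_eq_left h.2, max_eq_right h.1]

theorem cl_of_ge {y : ℝ} (h : 1 ≤ y) : cl y = 1 := by
  rw [cl, min_eq_right h, max_eq_right zero_le_one]

theorem cl_cont : Continuous cl := by unfold cl; fun_prop

theorem s_eq {S : ℝ → ℝ} {v ε t : ℝ} (hε : 0 < ε) (ht : 0 ≤ t) (h1 : S 1 = v) :
    (if 0 ≤ t ∧ t ≤ ε then S (t/ε) else v) = S (cl (t/ε)) := by
  split_ifs with h
  · rw [cl_of_mem ⟨by positivity, (div_le_one hε).2 h.2⟩]
  · push Not at h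
    rw [cl_of_ge ((one_le_div hε).2 (h ht).le), h1]

theorem T_one : T0 1 = π ∧ T12 1 = 0 ∧ T2 1 = π/4 ∧ T22 1 = π/4 ∧ T3 1 = 0 ∧ T32 1 = 0 := by
  have h1 : (0:ℝ) ^ ((3:ℝ)/2) = 0 := Real.zero_rpow (by norm_num)
  have h2 : (0:ℝ) ^ ((5:ℝ)/2) = 0 := Real.zero_rpow (by norm_num)
  refine ⟨?_, ?_, ?_, ?_, ?_, ?_⟩
  · simp [T0]
  · simp [T12, h1]
  · simp [T2]; ring
  · simp [T22]; ring
  · simp [T3, h2]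
  · simp [T32, h1]

theorem phi_eq {ε t : ℝ} (hε : 0 < ε) (ht : 0 ≤ t) :
    phi11 ε t = Q11 (cl (t/ε)) ∧ phi22 ε t = Q22 (cl (t/ε)) ∧ phi2d ε t = Q2 (cl (t/ε)) := by
  obtain ⟨h1, h2, h3, h4, h5, h6⟩ := T_one
  have e0 : s0 ε t = T0 (cl (t/ε)) := s_eq (S := T0) hε ht h1
  have e12 : s12 ε t = T12 (cl (t/ε)) := s_eq (S := T12) hε ht h2
  have e2 : s2 ε t = T2 (cl (t/ε)) := s_eq (S := T2) hε ht h3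
  have e22 : s22 ε t = T22 (cl (t/ε)) := s_eq (S := T22) hε ht h4
  have e3 : s3 ε t = T3 (cl (t/ε)) := s_eq (S := T3) hε ht h5
  have e32 : s32 ε t = T32 (cl (t/ε)) := s_eq (S := T32) hε ht h6
  refine ⟨?_, ?_, ?_⟩
  · simp only [phi11, Q11, TD, e0, e12, e2, e22, e3]
  · simp only [phi22, Q22, TD, e0, e12, e22, e32]
  · simp only [phi2d, Q2, TD, e0, e12, e22]

theorem Q_one : Q11 1 = -(1/8) ∧ Q22 1 = -(1/8) ∧ Q2 1 = 0 := by
  obtain ⟨h1, h2, h3, h4, h5, h6⟩ := T_one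
  have := Real.pi_ne_zero
  refine ⟨?_, ?_, ?_⟩
  · simp only [Q11, TD, h1, h2, h3, h4, h5]; field_simp; ring
  · simp only [Q22, TD, h1, h2, h4, h6]; field_simp; ring
  · simp only [Q2, h2, zero_div]

theorem T_cont : Continuous T0 ∧ Continuous T12 ∧ Continuous T2 ∧ Continuous T22 ∧
    Continuous T3 ∧ Continuous T32 := by
  have hs : Continuous (fun τ : ℝ => Real.sqrt (1 - τ^2)) := by fun_prop
  have ha : Continuous Real.arcsin := Real.continuous_arcsin
  have h1 : Continuous (fun τ : ℝ => (1 - τ^2) ^ ((3:ℝ)/2)) :=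
    (by fun_prop : Continuous (fun τ : ℝ => 1 - τ^2)).rpow_const (fun _ => Or.inr (by norm_num))
  have h2 : Continuous (fun τ : ℝ => (1 - τ^2) ^ ((5:ℝ)/2)) :=
    (by fun_prop : Continuous (fun τ : ℝ => 1 - τ^2)).rpow_const (fun _ => Or.inr (by norm_num))
  unfold T0 T12 T2 T22 T3 T32
  refine ⟨?_, ?_, ?_, ?_, ?_, ?_⟩ <;> fun_prop

theorem T_cd {τ : ℝ} (h : τ ∈ Ioo (0:ℝ) 1) : ContDiffAt ℝ 1 T0 τ ∧ ContDiffAt ℝ 1 T12 τ ∧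
    ContDiffAt ℝ 1 T2 τ ∧ ContDiffAt ℝ 1 T22 τ ∧ ContDiffAt ℝ 1 T3 τ ∧ ContDiffAt ℝ 1 T32 τ := by
  have hp : 1 - τ^2 ≠ 0 := by nlinarith [h.1, h.2]
  have hb : ContDiffAt ℝ 1 (fun τ : ℝ => 1 - τ^2) τ := by fun_prop
  have hs : ContDiffAt ℝ 1 (fun τ : ℝ => Real.sqrt (1 - τ^2)) τ := hb.sqrt hp
  have ha : ContDiffAt ℝ 1 Real.arcsin τ :=
    Real.contDiffAt_arcsin (by linarith [h.1]) (by linarith [h.2])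
  have h1 : ContDiffAt ℝ 1 (fun τ : ℝ => (1 - τ^2) ^ ((3:ℝ)/2)) τ := hb.rpow_const_of_ne hp
  have h2 : ContDiffAt ℝ 1 (fun τ : ℝ => (1 - τ^2) ^ ((5:ℝ)/2)) τ := hb.rpow_const_of_ne hp
  unfold T0 T12 T2 T22 T3 T32
  refine ⟨?_, ?_, ?_, ?_, ?_, ?_⟩ <;> fun_prop

theorem pw {x : ℝ} (hx : 0 ≤ x) : 0 ≤ x ^ ((3:ℝ)/2) ∧ x ^ ((3:ℝ)/2) * x ^ ((3:ℝ)/2) = x ^ 3 ∧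
    0 ≤ x ^ ((5:ℝ)/2) := by
  refine ⟨by positivity, ?_, by positivity⟩
  rw [← Real.rpow_add_of_nonneg hx (by norm_num) (by norm_num)]
  norm_num

theorem hd_s {τ : ℝ} (h : τ ∈ Ioo (0:ℝ) 1) : 0 < Real.sqrt (1 - τ^2) ∧
    Real.sqrt (1 - τ^2) ^ 2 = 1 - τ ^ 2 ∧
    HasDerivAt (fun τ : ℝ => Real.sqrt (1 - τ^2)) (-τ / Real.sqrt (1 - τ^2)) τ ∧
    HasDerivAt Real.arcsin (1 / Real.sqrt (1 - τ^2)) τ := by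
  have hp : 0 < 1 - τ^2 := by nlinarith [h.1, h.2]
  refine ⟨Real.sqrt_pos.2 hp, Real.sq_sqrt hp.le, ?_,
    Real.hasDerivAt_arcsin (by linarith [h.1]) (by linarith [h.2])⟩
  have hb : HasDerivAt (fun τ : ℝ => 1 - τ^2) (-(2 * τ)) τ := by
    simpa using (hasDerivAt_pow 2 τ).const_sub 1
  refine (hb.sqrt hp.ne').congr_deriv ?_
  have := (Real.sqrt_pos.2 hp).ne'
  field_simp

theorem hd_T22 {τ : ℝ} (h : τ ∈ Ioo (0:ℝ) 1) :
    HasDerivAt T22 (2 * τ ^ 2 * Real.sqrt (1 - τ^2)) τ := by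
  obtain ⟨h1, h2, h3, h4⟩ := hd_s h
  have hb : HasDerivAt (fun τ : ℝ => 2*τ^2 - 1) (2 * (2 * τ)) τ := by
    simpa using ((hasDerivAt_pow 2 τ).const_mul 2).sub_const 1
  have := (((((hasDerivAt_id τ).mul h3).mul hb).add h4).const_mul (1/4)).const_add (π/8)
  refine this.congr_deriv ?_
  simp only [Pi.mul_apply, id]
  generalize Real.sqrt (1 - τ^2) = s at *
  field_simp
  have e : τ ^ 2 = 1 - s ^ 2 := by linarith
  rw [e]
  ring

theorem hd_T2 {τ : ℝ} (h : τ ∈ Ioo (0:ℝ) 1) :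
    HasDerivAt T2 (2 / 3 * Real.sqrt (1 - τ^2) ^ 3) τ := by
  obtain ⟨h1, h2, h3, h4⟩ := hd_s h
  have hb : HasDerivAt (fun τ : ℝ => 5 - 2*τ^2) (-(2 * (2 * τ))) τ := by
    simpa using ((hasDerivAt_pow 2 τ).const_mul 2).const_sub 5
  have := (((((hasDerivAt_id τ).mul h3).mul hb).add (h4.const_mul 3)).const_mul (1/12)).const_add
    (π/8)
  refine this.congr_deriv ?_
  simp only [Pi.mul_apply, id]
  generalize Real.sqrt (1 - τ^2) = s at *
  field_simp
  have e : τ ^ 2 = 1 - s ^ 2 := by linarith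
  rw [e]
  ring

theorem T_bd {τ : ℝ} (h : τ ∈ Icc (0:ℝ) 1) : π/8 ≤ T22 τ ∧ T22 τ ≤ π/4 ∧ T2 τ ≤ π/4 ∧
    π/2 ≤ T0 τ ∧ T12 τ ^ 2 ≤ 4/9 ∧ TD τ < 0 ∧ 0 ≤ T3 τ * T12 τ := by
  obtain ⟨c0, c12, c2, c22, c3, c32⟩ := T_cont
  obtain ⟨o1, o2, o3, o4, o5, o6⟩ := T_one
  have m22 : MonotoneOn T22 (Icc 0 1) := by
    apply monotoneOn_of_deriv_nonneg (convex_Icc 0 1) c22.continuousOn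
    · intro x hx
      rw [interior_Icc] at hx
      exact (hd_T22 hx).differentiableAt.differentiableWithinAt
    · intro x hx
      rw [interior_Icc] at hx
      rw [(hd_T22 hx).deriv]
      positivity
  have m2 : MonotoneOn T2 (Icc 0 1) := by
    apply monotoneOn_of_deriv_nonneg (convex_Icc 0 1) c2.continuousOn
    · intro x hx
      rw [interior_Icc] at hx
      exact (hd_T2 hx).differentiableAt.differentiableWithinAt
    · intro x hx
      rw [interior_Icc] at hx
      rw [(hd_T2 hx).deriv]
      positivity
  have a1 : π/8 ≤ T22 τ := by
    have := m22 (left_mem_Icc.2 zero_le_one) h h.1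
    simpa [T22] using this
  have a2 := m22 h (right_mem_Icc.2 zero_le_one) h.2
  have a3 := m2 h (right_mem_Icc.2 zero_le_one) h.2
  rw [o4] at a2
  rw [o3] at a3
  have a4 : π/2 ≤ T0 τ := by
    have h1 := Real.arcsin_nonneg.2 h.1
    have h2 := mul_nonneg h.1 (Real.sqrt_nonneg (1 - τ^2))
    unfold T0
    linarith
  have hx : 0 ≤ 1 - τ^2 := by nlinarith [h.1, h.2]
  obtain ⟨p1, p2, p3⟩ := pw hx
  have a5 : T12 τ ^ 2 ≤ 4/9 := by
    have : T12 τ ^ 2 = 4/9 * (1 - τ^2) ^ 3 := by rw [← p2]; unfold T12; ring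
    rw [this]
    have : (1 - τ^2) ^ 3 ≤ 1 := pow_le_one₀ hx (by nlinarith [h.1])
    linarith
  have hpi := Real.pi_gt_three
  refine ⟨a1, a2, a3, a4, a5, ?_, ?_⟩
  · unfold TD
    nlinarith [mul_le_mul a1 a4 (by positivity) (by linarith)]
  · unfold T3 T12
    have := mul_nonneg p3 p1
    nlinarith

noncomputable def TN (τ : ℝ) : ℝ := (T22 τ)^2 - 4/45 * ((2 + 3*τ^2) * (1 - τ^2) ^ 3)

theorem TN_eq {τ : ℝ} (h : τ ∈ Icc (0:ℝ) 1) : (T22 τ)^2 - T32 τ * T12 τ = TN τ := by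
  have hx : 0 ≤ 1 - τ^2 := by nlinarith [h.1, h.2]
  unfold TN
  rw [← (pw hx).2.1]
  unfold T32 T12
  ring

theorem hd_TN {τ : ℝ} (h : τ ∈ Ioo (0:ℝ) 1) : ∃ d > 0, HasDerivAt TN d τ := by
  have hb : HasDerivAt (fun τ : ℝ => 1 - τ^2) (-(2 * τ)) τ := by
    simpa using (hasDerivAt_pow 2 τ).const_sub 1
  have hc : HasDerivAt (fun τ : ℝ => 2 + 3 * τ^2) (3 * (2 * τ)) τ := by
    simpa using ((hasDerivAt_pow 2 τ).const_mul 3).const_add 2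
  have := ((hd_T22 h).pow 2).sub ((hc.mul (hb.pow 3)).const_mul (4/45))
  refine ⟨_, ?_, this⟩
  have hx : 0 < 1 - τ^2 := by nlinarith [h.1, h.2]
  have h1 := (T_bd (Ioo_subset_Icc_self h)).1
  have h2 : 0 < T22 τ := by linarith [Real.pi_pos]
  have h3 := h.1
  have h4 : 0 ≤ 2 * T22 τ * (2 * τ ^ 2 * Real.sqrt (1 - τ^2)) := by positivity
  have h5 : 0 < 4/45 * (6 * τ * (1 - τ^2) ^ 2 * (1 + 4 * τ^2)) := by positivity
  simp only [Pi.pow_apply]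
  norm_num
  nlinarith

theorem TN_mono : StrictMonoOn TN (Icc 0 1) := by
  obtain ⟨c0, c12, c2, c22, c3, c32⟩ := T_cont
  apply strictMonoOn_of_deriv_pos (convex_Icc 0 1)
  · unfold TN
    exact (by fun_prop : Continuous _).continuousOn
  · intro x hx
    rw [interior_Icc] at hx
    obtain ⟨d, hd, h⟩ := hd_TN hx
    rw [h.deriv]; exact hd

theorem TN_half {τ : ℝ} (h : τ ∈ Icc (0:ℝ) 1) (hz : TN τ ≤ 0) : τ < 1/2 := by
  by_contra hh
  push Not at hh
  have h1 : (1/2:ℝ) ∈ Icc (0:ℝ) 1 := by norm_num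
  have h2 := TN_mono.monotoneOn h1 h hh
  have h3 := (T_bd h1).1
  unfold TN at h2
  have : TN τ ≤ 0 := hz
  unfold TN at this
  nlinarith [Real.pi_gt_three]

theorem Q_cont : ContinuousOn Q11 (Icc 0 1) ∧ ContinuousOn Q22 (Icc 0 1) ∧
    ContinuousOn Q2 (Icc 0 1) := by
  obtain ⟨c0, c12, c2, c22, c3, c32⟩ := T_cont
  have hD : Continuous TD := by unfold TD; fun_prop
  have h0 : ∀ x ∈ Icc (0:ℝ) 1, TD x ≠ 0 := fun x hx => (T_bd hx).2.2.2.2.2.1.ne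
  refine ⟨?_, ?_, ?_⟩
  · exact ContinuousOn.div (by fun_prop) hD.continuousOn h0
  · exact ContinuousOn.div (by fun_prop) hD.continuousOn h0
  · exact ContinuousOn.div (by fun_prop) hD.continuousOn h0

theorem Q_cd {τ : ℝ} (h : τ ∈ Ioo (0:ℝ) 1) : ContDiffAt ℝ 1 Q11 τ ∧ ContDiffAt ℝ 1 Q22 τ ∧
    ContDiffAt ℝ 1 Q2 τ := by
  obtain ⟨c0, c12, c2, c22, c3, c32⟩ := T_cd h
  have hD : ContDiffAt ℝ 1 TD τ := by unfold TD; fun_prop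
  have h0 : TD τ ≠ 0 := (T_bd (Ioo_subset_Icc_self h)).2.2.2.2.2.1.ne
  refine ⟨?_, ?_, ?_⟩
  · exact ContDiffAt.div (by fun_prop) hD h0
  · exact ContDiffAt.div (by fun_prop) hD h0
  · exact ContDiffAt.div (by fun_prop) hD h0

theorem Q22_sign {τ : ℝ} (h : τ ∈ Icc (0:ℝ) 1) : Q22 τ = (1/2) * TN τ / TD τ := by
  rw [Q22, TN_eq h]

theorem Q22_deriv {τ : ℝ} (h : τ ∈ Ioo (0:ℝ) 1) (hz : TN τ = 0) : deriv Q22 τ < 0 := by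
  obtain ⟨d, hd, hN⟩ := hd_TN h
  obtain ⟨c0, c12, c2, c22, c3, c32⟩ := T_cd h
  have hD : ContDiffAt ℝ 1 TD τ := by unfold TD; fun_prop
  have h0 : TD τ < 0 := (T_bd (Ioo_subset_Icc_self h)).2.2.2.2.2.1
  have hD' := (hD.differentiableAt one_ne_zero).hasDerivAt
  have h1 := (hN.const_mul (1/2)).div hD' h0.ne
  have h2 : Q22 =ᶠ[𝓝 τ] fun y => (1/2) * TN y / TD y := by
    filter_upwards [isOpen_Ioo.mem_nhds h] with y hy
    exact Q22_sign (Ioo_subset_Icc_self hy)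
  have h3 := (h1.congr_of_eventuallyEq h2).deriv
  rw [h3, hz]
  have : 0 < TD τ ^ 2 := by nlinarith
  apply div_neg_of_neg_of_pos _ this
  nlinarith

theorem QB_pos {τ r : ℝ} (h : τ ∈ Icc (0:ℝ) 1) (hh : τ < 1/2) (hr : 3/4 ≤ r) :
    0 < Q11 τ / r + Q2 τ := by
  obtain ⟨b1, b2, b3, b4, b5, b6, b7⟩ := T_bd h
  have hx : 0 ≤ 1 - τ^2 := by nlinarith [h.1, h.2]
  obtain ⟨p1, p2, p3⟩ := pw hx
  have hx2 : 3/4 ≤ 1 - τ^2 := by nlinarith [h.1]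
  have hx3 : (3/4:ℝ)^3 ≤ (1 - τ^2)^3 := pow_le_pow_left₀ (by norm_num) hx2 3
  have h1 : (0.64:ℝ) ≤ (1 - τ^2) ^ ((3:ℝ)/2) := by
    by_contra hc
    push Not at hc
    nlinarith
  have h2 : T12 τ ≤ -(2/3) * 0.64 := by unfold T12; nlinarith
  have hr0 : 0 < r := by linarith
  have hp0 := Real.pi_pos
  have h3 : T22 τ * T2 τ ≤ (π/4) * (π/4) := by
    have : T22 τ * T2 τ ≤ T22 τ * (π/4) := mul_le_mul_of_nonneg_left b3 (by linarith)
    have : T22 τ * (π/4) ≤ (π/4) * (π/4) := mul_le_mul_of_nonneg_right b2 (by linarith)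
    linarith
  have hpi : π < 3.15 := Real.pi_lt_d2
  have h4 : T22 τ * T2 τ - T3 τ * T12 τ ≤ 0.6202 := by nlinarith
  have e : Q11 τ / r + Q2 τ =
    ((1/2) * (T22 τ * T2 τ - T3 τ * T12 τ) + r * T12 τ) / (r * TD τ) := by
    unfold Q11 Q2
    have := b6.ne
    field_simp
  rw [e]
  apply div_pos_of_neg_of_neg
  · nlinarith
  · nlinarith

theorem coef : ∃ ε₀ > (0:ℝ), ε₀ ≤ 1/4 ∧ ∀ ε : ℝ, 0 < ε → ε ≤ ε₀ →
    ∀ r0 ∈ Ioo (0:ℝ) ε, phi22 ε r0 = 0 →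
    ∃ f11 f22 f2 : ℝ → ℝ, (Continuous f11 ∧ Continuous f22 ∧ Continuous f2) ∧
      (∀ r ≤ 1, phi11 ε (1-r) = f11 r ∧ phi22 ε (1-r) = f22 r ∧ phi2d ε (1-r) = f2 r) ∧
      (∀ r < 1 - r0, f22 r < 0) ∧ (∀ r > 1 - r0, 0 < f22 r) ∧ f22 (1 - r0) = 0 ∧
      (ContDiffAt ℝ 1 f11 (1 - r0) ∧ ContDiffAt ℝ 1 f22 (1 - r0) ∧ ContDiffAt ℝ 1 f2 (1 - r0)) ∧
      (∀ r ≥ 1 - r0, 0 < f11 r / r + f2 r) ∧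
      (∀ r ≤ 1 - ε, f11 r = -(1/8) ∧ f22 r = -(1/8) ∧ f2 r = 0) ∧
      2 * (f11 (1 - r0) / (1 - r0) + f2 (1 - r0)) < deriv f22 (1 - r0) := by
  -- uniform choice
  obtain ⟨ε₀, h0, h14, key⟩ : ∃ ε₀ > (0:ℝ), ε₀ ≤ 1/4 ∧ ∀ τ ∈ Ioo (0:ℝ) 1, TN τ = 0 →
      ∀ ε, 0 < ε → ε ≤ ε₀ → 2 * (|Q2 τ| + 2 * |Q11 τ|) < -deriv Q22 τ / ε := by
    by_cases hex : ∃ τ ∈ Ioo (0:ℝ) 1, TN τ = 0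
    · obtain ⟨t, ht, hz⟩ := hex
      have ha := Q22_deriv ht hz
      set b := |Q2 t| + 2 * |Q11 t| with hb
      have hb0 : 0 ≤ b := by positivity
      refine ⟨min (1/4) (-deriv Q22 t / (2 * b + 1)),
        lt_min (by norm_num) (div_pos (by linarith) (by linarith)), min_le_left _ _, ?_⟩
      intro τ hτ hz' ε hε hle
      have : τ = t := TN_mono.injOn (Ioo_subset_Icc_self hτ) (Ioo_subset_Icc_self ht)
        (by rw [hz, hz'])
      subst this
      have h1 := hle.trans (min_le_right _ _)
      rw [le_div_iff₀ (by linarith)] at h1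
      rw [lt_div_iff₀ hε]
      nlinarith
    · refine ⟨1/4, by norm_num, le_rfl, fun τ h1 h2 => (hex ⟨τ, h1, h2⟩).elim⟩
  refine ⟨ε₀, h0, h14, ?_⟩
  intro ε hε hle r0 hr0 hz
  set τ := r0 / ε with hτ
  have hτm : τ ∈ Ioo (0:ℝ) 1 := ⟨div_pos hr0.1 hε, (div_lt_one hε).2 hr0.2⟩
  have hτI := Ioo_subset_Icc_self hτm
  have hN : TN τ = 0 := by
    rw [(phi_eq hε hr0.1.le).2.1, cl_of_mem hτI, Q22_sign hτI] at hz
    have := (T_bd hτI).2.2.2.2.2.1.ne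
    rcases div_eq_zero_iff.1 hz with h | h
    · linarith
    · exact (this h).elim
  set g : ℝ → ℝ := fun r => cl ((1 - r) / ε) with hg
  have hgc : Continuous g := cl_cont.comp (by fun_prop)
  have hgm : ∀ r, g r ∈ Icc (0:ℝ) 1 := fun r => cl_mem _
  have hgr : g (1 - r0) = τ := by
    simp only [hg]
    rw [show 1 - (1 - r0) = r0 by ring, ← hτ, cl_of_mem hτI]
  have hge : g =ᶠ[𝓝 (1 - r0)] fun r => (1 - r) / ε := by
    have : Tendsto (fun r : ℝ => (1 - r) / ε) (𝓝 (1 - r0)) (𝓝 ((1 - (1 - r0)) / ε)) :=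
      (by fun_prop : Continuous fun r : ℝ => (1 - r) / ε).tendsto _
    rw [show 1 - (1 - r0) = r0 by ring] at this
    filter_upwards [this.eventually (isOpen_Ioo.mem_nhds hτm)] with r hr
    exact cl_of_mem (Ioo_subset_Icc_self hr)
  have hgd : ContDiffAt ℝ 1 g (1 - r0) :=
    ContDiffAt.congr_of_eventuallyEq (by fun_prop) hge
  have hgD : HasDerivAt g (-1 / ε) (1 - r0) := by
    refine HasDerivAt.congr_of_eventuallyEq ?_ hge
    exact (((hasDerivAt_id _).const_sub 1).div_const ε)
  obtain ⟨qc1, qc2, qc3⟩ := Q_cont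
  obtain ⟨qd1, qd2, qd3⟩ := Q_cd hτm
  have hanti : ∀ r s, r < s → g s ≤ g r := by
    intro r s h
    simp only [hg, cl]
    gcongr
  refine ⟨fun r => Q11 (g r), fun r => Q22 (g r), fun r => Q2 (g r),
    ⟨qc1.comp_continuous hgc hgm, qc2.comp_continuous hgc hgm, qc3.comp_continuous hgc hgm⟩,
    fun r hr => phi_eq hε (by linarith), ?_, ?_, ?_, ⟨?_, ?_, ?_⟩, ?_, ?_, ?_⟩
  · intro r hr
    show Q22 (g r) < 0
    have h1 : τ < g r := by
      simp only [hg, cl]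
      rw [lt_max_iff, lt_min_iff]
      right
      exact ⟨by rw [hτ]; gcongr; linarith, hτm.2⟩
    have h2 := TN_mono hτI (hgm r) h1
    rw [Q22_sign (hgm r)]
    exact div_neg_of_pos_of_neg (by linarith) (T_bd (hgm r)).2.2.2.2.2.1
  · intro r hr
    show 0 < Q22 (g r)
    have h1 : g r < τ := by
      simp only [hg, cl]
      rw [max_lt_iff, min_lt_iff]
      exact ⟨hτm.1, Or.inl (by rw [hτ]; gcongr; linarith)⟩
    have h2 := TN_mono (hgm r) hτI h1
    rw [Q22_sign (hgm r)]
    exact div_pos_of_neg_of_neg (by linarith) (T_bd (hgm r)).2.2.2.2.2.1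
  · show Q22 (g (1 - r0)) = 0
    rw [hgr, Q22_sign hτI, hN]; simp
  · exact ContDiffAt.comp (1 - r0) (by rw [hgr]; exact qd1) hgd
  · exact ContDiffAt.comp (1 - r0) (by rw [hgr]; exact qd2) hgd
  · exact ContDiffAt.comp (1 - r0) (by rw [hgr]; exact qd3) hgd
  · intro r hr
    apply QB_pos (hgm r)
    · have : g r ≤ τ := by
        rcases eq_or_lt_of_le hr with h | h
        · rw [← h, hgr]
        · rw [← hgr]; exact hanti _ _ h
      exact this.trans_lt (TN_half hτI hN.le)
    · linarith [hr0.2]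
  · intro r hr
    have : g r = 1 := cl_of_ge ((one_le_div hε).2 (by linarith))
    show Q11 (g r) = _ ∧ Q22 (g r) = _ ∧ Q2 (g r) = _
    rw [this]
    exact Q_one
  · show 2 * (Q11 (g (1 - r0)) / (1 - r0) + Q2 (g (1 - r0))) < deriv (fun r => Q22 (g r)) (1 - r0)
    have h1 : HasDerivAt Q22 (deriv Q22 τ) (g (1 - r0)) := by
      rw [hgr]; exact (qd2.differentiableAt one_ne_zero).hasDerivAt
    have h2 := (HasDerivAt.comp (1 - r0) h1 hgD).deriv
    rw [show (fun r => Q22 (g r)) = Q22 ∘ g from rfl, h2, hgr]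
    have h3 := key τ hτm hN ε hε hle
    have h4 : Q11 τ / (1 - r0) ≤ 2 * |Q11 τ| := by
      rw [div_le_iff₀ (by linarith [hr0.2])]
      nlinarith [le_abs_self (Q11 τ), abs_nonneg (Q11 τ), hr0.2]
    have h5 := le_abs_self (Q2 τ)
    have h6 : deriv Q22 τ * (-1 / ε) = -deriv Q22 τ / ε := by ring
    rw [h6]
    linarith

theorem refl_t1 (R : ℝ) : Tendsto (fun x : ℝ => R - x) (𝓝[>] 0) (𝓝[<] R) := by
  apply tendsto_nhdsWithin_of_tendsto_nhds_of_eventually_within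
  · have : Tendsto (fun x : ℝ => R - x) (𝓝 0) (𝓝 (R - 0)) :=
      (by fun_prop : Continuous fun x : ℝ => R - x).tendsto _
    rw [sub_zero] at this
    exact this.mono_left nhdsWithin_le_nhds
  · filter_upwards [self_mem_nhdsWithin] with x hx
    have : 0 < x := hx
    exact (by linarith : R - x < R)

theorem refl_t2 (R : ℝ) : Tendsto (fun x : ℝ => R - x) (𝓝[<] R) (𝓝[>] 0) := by
  apply tendsto_nhdsWithin_of_tendsto_nhds_of_eventually_within
  · have : Tendsto (fun x : ℝ => R - x) (𝓝 R) (𝓝 (R - R)) :=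
      (by fun_prop : Continuous fun x : ℝ => R - x).tendsto _
    rw [sub_self] at this
    exact this.mono_left nhdsWithin_le_nhds
  · filter_upwards [self_mem_nhdsWithin] with x hx
    have : x < R := hx
    exact (by linarith : 0 < R - x)

theorem shift_t1 (R : ℝ) : Tendsto (fun x : ℝ => x - R) (𝓝[>] R) (𝓝[>] 0) := by
  apply tendsto_nhdsWithin_of_tendsto_nhds_of_eventually_within
  · have : Tendsto (fun x : ℝ => x - R) (𝓝 R) (𝓝 (R - R)) :=
      (by fun_prop : Continuous fun x : ℝ => x - R).tendsto _
    rw [sub_self] at this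
    exact this.mono_left nhdsWithin_le_nhds
  · filter_upwards [self_mem_nhdsWithin] with x hx
    have : R < x := hx
    exact (by linarith : 0 < x - R)

theorem unrefl {f : ℝ → ℝ} {R : ℝ} {l : Filter ℝ}
    (h : Tendsto (fun x => f (R - x)) (𝓝[>] 0) l) : Tendsto f (𝓝[<] R) l := by
  have := h.comp (refl_t2 R)
  refine this.congr (fun x => ?_)
  simp

theorem hd_refl {f : ℝ → ℝ} {f' R x : ℝ} (h : HasDerivAt f f' (R - x)) :
    HasDerivAt (fun x => f (R - x)) (-f') x := by
  have h1 : HasDerivAt (fun x : ℝ => R - x) (-1) x := (hasDerivAt_id x).const_sub R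
  exact (HasDerivAt.comp x h h1).congr_deriv (by ring)

theorem hd_shift {f : ℝ → ℝ} {f' R x : ℝ} (h : HasDerivAt f f' (x - R)) :
    HasDerivAt (fun x => f (x - R)) f' x := by
  have h1 : HasDerivAt (fun x : ℝ => x - R) 1 x := (hasDerivAt_id x).sub_const R
  exact (HasDerivAt.comp x h h1).congr_deriv (by ring)

theorem P_refl {P A B : ℝ → ℝ} {R : ℝ}
    (hP : ∀ r ∈ Ioo 0 R, 0 < P r ∧ HasDerivAt P (P r * (B r / A r)) r) :
    ∀ x ∈ Ioo 0 R, 0 < P (R - x) ∧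
      HasDerivAt (fun x => P (R - x)) (P (R - x) * (B (R - x) / -A (R - x))) x := by
  intro x hx
  obtain ⟨h1, h2⟩ := hP (R - x) ⟨by linarith [hx.2], by linarith [hx.1]⟩
  exact ⟨h1, (hd_refl h2).congr_deriv (by rw [div_neg]; ring)⟩

theorem cd_refl {A : ℝ → ℝ} {R : ℝ} (h : ContDiffAt ℝ 1 A R) :
    ContDiffAt ℝ 1 (fun x => A (R - x)) 0 := by
  have : ContDiffAt ℝ 1 A (R - 0) := by rwa [sub_zero]
  exact ContDiffAt.comp (0:ℝ) this (by fun_prop)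

theorem d_refl {A : ℝ → ℝ} {R : ℝ} (h : ContDiffAt ℝ 1 A R) :
    deriv (fun x => A (R - x)) 0 = -deriv A R := by
  have h1 : HasDerivAt A (deriv A R) (R - 0) := by
    rw [sub_zero]; exact (h.differentiableAt one_ne_zero).hasDerivAt
  exact (hd_refl h1).deriv

theorem cd_add {A : ℝ → ℝ} {R : ℝ} (h : ContDiffAt ℝ 1 A R) :
    ContDiffAt ℝ 1 (fun x => A (R + x)) 0 := by
  have : ContDiffAt ℝ 1 A (R + 0) := by rwa [add_zero]
  exact ContDiffAt.comp (0:ℝ) this (by fun_prop)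

theorem d_add {A : ℝ → ℝ} {R : ℝ} (h : ContDiffAt ℝ 1 A R) :
    deriv (fun x => A (R + x)) 0 = deriv A R := by
  have h1 : HasDerivAt A (deriv A R) (R + 0) := by
    rw [add_zero]; exact (h.differentiableAt one_ne_zero).hasDerivAt
  have h2 : HasDerivAt (fun x : ℝ => R + x) 1 0 := (hasDerivAt_id 0).const_add R
  exact ((HasDerivAt.comp (0:ℝ) h1 h2).congr_deriv (mul_one _)).deriv

theorem P_lim {P A B : ℝ → ℝ} {R : ℝ} (hR : 0 < R)
    (hAn : ∀ r < R, A r < 0) (hAR : A R = 0) (hA : ContDiffAt ℝ 1 A R) (hB : ContDiffAt ℝ 1 B R)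
    (hBR : 0 < B R)
    (hP : ∀ r ∈ Ioo 0 R, 0 < P r ∧ HasDerivAt P (P r * (B r / A r)) r) :
    Tendsto P (𝓝[<] R) (𝓝 0) := by
  apply unrefl
  obtain ⟨c, hc, δ', hδ', hle, hq⟩ := q_lower (A := fun x => -A (R - x)) (B := fun x => B (R - x))
    hR ((cd_refl hA).differentiableAt one_ne_zero).neg (cd_refl hB).continuousAt
    (by simp [hAR]) (fun x hx => neg_pos.2 (hAn _ (by linarith [hx.1]))) (by simpa using hBR)
  exact P_upper hδ' hc (fun x hx => P_refl hP x ⟨hx.1, hx.2.trans_le hle⟩) hq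

theorem u0_ex {P A B u u1 : ℝ → ℝ} {R : ℝ} (hR : 0 < R)
    (hAn : ∀ r < R, A r < 0) (hAR : A R = 0) (hA : ContDiffAt ℝ 1 A R) (hB : ContDiffAt ℝ 1 B R)
    (hBR : 0 < B R) (hAB : 2 * B R < deriv A R)
    (hP : ∀ r ∈ Ioo 0 R, 0 < P r ∧ HasDerivAt P (P r * (B r / A r)) r)
    (hu : ∀ r ∈ Ioo 0 R, HasDerivAt u (u1 r) r)
    (hPu : Tendsto (fun r => P r * u1 r) (𝓝[<] R) (𝓝 0)) :
    ∃ u0, Tendsto u (𝓝[<] R) (𝓝 u0) := by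
  -- slope of A
  have hd := (hA.differentiableAt one_ne_zero).hasDerivAt
  have hA' : HasDerivAt (fun x => -A (R - x)) (deriv A R) 0 := by
    have h1 : HasDerivAt A (deriv A R) (R - 0) := by rwa [sub_zero]
    exact (hd_refl h1).neg.congr_deriv (by ring)
  have hs := hA'.tendsto_slope
  have hs' : Tendsto (fun x => 2 * B (R - x) - slope (fun x => -A (R - x)) 0 x) (𝓝[>] 0)
      (𝓝 (2 * B (R - 0) - deriv A R)) :=
    (((cd_refl hB).continuousAt.tendsto.mono_left nhdsWithin_le_nhds).const_mul 2).sub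
      (hs.mono_left (nhdsWithin_mono _ (fun x hx => ne_of_gt hx)))
  rw [sub_zero] at hs'
  have hev := hs'.eventually (Iio_mem_nhds (by linarith : 2 * B R - deriv A R < 0))
  have hev2 : ∀ᶠ x in 𝓝[>] (0:ℝ), |P (R - x) * u1 (R - x)| < 1 := by
    have := (hPu.comp (refl_t1 R)).abs
    rw [abs_zero] at this
    exact this.eventually (Iio_mem_nhds one_pos)
  obtain ⟨d, hd0, hdd⟩ := mem_nhdsGT_iff_exists_Ioo_subset.1
    (hev.and (hev2.and (Ioo_mem_nhdsGT hR)))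
  have hd0 : 0 < d := hd0
  have hq : ∀ x ∈ Ioo 0 d, B (R - x) / -A (R - x) ≤ 1 / (2 * x) := by
    intro x hx
    have h1 := (hdd hx).1
    have h2 : 0 < -A (R - x) := neg_pos.2 (hAn _ (by linarith [hx.1]))
    have hx0 := hx.1
    simp only [slope, vsub_eq_sub, sub_zero, smul_eq_mul, hAR, neg_zero, mem_Iio] at h1
    rw [div_le_div_iff₀ h2 (by positivity)]
    have h3 : 2 * B (R - x) < x⁻¹ * -A (R - x) := by linarith
    rw [inv_mul_eq_div, lt_div_iff₀ hx0] at h3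
    linarith
  obtain ⟨c, hc, hcP⟩ := P_lower hd0 (fun x hx => P_refl hP x (hdd hx).2.2) hq
  have hbd : ∀ x ∈ Ioo 0 (d/2), |-u1 (R - x)| * √x ≤ 1 / c := by
    intro x hx
    have hx' : x ∈ Ioo 0 d := ⟨hx.1, by linarith [hx.2]⟩
    have h1 := hcP x hx
    have h2 := (hdd hx').2.1
    rw [abs_mul, abs_of_pos (P_refl hP x (hdd hx').2.2).1] at h2
    rw [abs_neg, le_div_iff₀ hc]
    have := mul_le_mul_of_nonneg_left h1 (abs_nonneg (u1 (R - x)))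
    nlinarith
  obtain ⟨l, hl⟩ := lim_of_sqrt_deriv (half_pos hd0) (f := fun x => u (R - x))
    (f' := fun x => -u1 (R - x)) (fun x hx => by
      have h := (hdd (show x ∈ Ioo 0 d from ⟨hx.1, by linarith [hx.2]⟩)).2.2
      exact hd_refl (hu _ ⟨by linarith [h.2], by linarith [h.1]⟩)) hbd
  exact ⟨l, unrefl hl⟩

theorem u2_cont {A B C u u1 u2 : ℝ → ℝ} {s : Set ℝ} (hs : IsOpen s)
    (hA : ContinuousOn A s) (hB : ContinuousOn B s) (hC : ContinuousOn C s)
    (hA0 : ∀ r ∈ s, A r ≠ 0)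
    (hu : ∀ r ∈ s, HasDerivAt u (u1 r) r ∧ HasDerivAt u1 (u2 r) r ∧
      A r * u2 r + B r * u1 r + C r * u r = 0) : ∀ r ∈ s, ContinuousAt u2 r := by
  intro r hr
  have hm := hs.mem_nhds hr
  have h1 : ContinuousAt (fun r => -(B r * u1 r + C r * u r) / A r) r :=
    (((hB.continuousAt hm).mul (hu r hr).2.1.continuousAt).add
      ((hC.continuousAt hm).mul (hu r hr).1.continuousAt)).neg.div (hA.continuousAt hm) (hA0 r hr)
  refine h1.congr ?_
  filter_upwards [hm] with x hx
  have := (hu x hx).2.2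
  rw [div_eq_iff (hA0 x hx)]
  linarith

theorem match_ext {P A B C u u1 u2 : ℝ → ℝ} {R : ℝ} (hR : 0 < R)
    (hAc : Continuous A) (hBc : ContinuousOn B (Ioi 0)) (hCc : ContinuousOn C (Ioi 0))
    (hAn : ∀ r < R, A r < 0) (hAp : ∀ r > R, 0 < A r) (hAR : A R = 0)
    (hA : ContDiffAt ℝ 1 A R) (hB : ContDiffAt ℝ 1 B R) (hC : ContDiffAt ℝ 1 C R)
    (hBp : ∀ r ≥ R, 0 < B r) (hAB : 2 * B R < deriv A R)
    (hP : ∀ r ∈ Ioo 0 R, 0 < P r ∧ HasDerivAt P (P r * (B r / A r)) r)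
    (hu : ∀ r ∈ Ioo 0 R, HasDerivAt u (u1 r) r ∧ HasDerivAt u1 (u2 r) r ∧
      A r * u2 r + B r * u1 r + C r * u r = 0)
    (hPu : Tendsto (fun r => P r * u1 r) (𝓝[<] R) (𝓝 0)) :
    ∃ U U1 U2 : ℝ → ℝ, (∀ r ∈ Ioo 0 (R + 1), HasDerivAt U (U1 r) r ∧ HasDerivAt U1 (U2 r) r ∧
      ContinuousAt U2 r ∧ A r * U2 r + B r * U1 r + C r * U r = 0) ∧
      ∀ r ∈ Ioo 0 R, U r = u r := by
  have hBR := hBp R le_rfl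
  have hdA : 0 < deriv A R := by linarith
  obtain ⟨u0, hu0⟩ := u0_ex hR hAn hAR hA hB hBR hAB hP (fun r hr => (hu r hr).1) hPu
  have hL := reg_lim (A := fun x => -A (R - x)) (B := fun x => B (R - x))
    (C := fun x => -C (R - x)) (v := fun x => u (R - x)) (v1 := fun x => -u1 (R - x))
    (v2 := fun x => u2 (R - x)) (P := fun x => P (R - x)) (v0 := u0) hR
    (cd_refl hA).neg (cd_refl hB) (cd_refl hC).neg (by simp [hAR])
    (fun x hx => neg_pos.2 (hAn _ (by linarith [hx.1]))) (by simpa using hBR)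
    (by
      have e : deriv (fun x => -A (R - x)) 0 = deriv A R := by
        rw [deriv.fun_neg, d_refl hA]; ring
      simp only [sub_zero]; rw [e]; linarith)
    (fun x hx => by
      obtain ⟨h1, h2, h3⟩ := hu (R - x) ⟨by linarith [hx.2], by linarith [hx.1]⟩
      refine ⟨hd_refl h1, (hd_refl h2).neg.congr_deriv (neg_neg _), by linarith⟩)
    (hu0.comp (refl_t1 R)) (P_refl hP)
    (by
      have := (hPu.comp (refl_t1 R)).neg
      rw [neg_zero] at this
      refine this.congr (fun x => ?_)
      simp)
  obtain ⟨M, δ, hδ, hM⟩ : ∃ M δ, 0 < δ ∧ ∀ x ∈ Ioo 0 δ, A (R + x) ≤ M * x := by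
    have h2 : HasDerivAt (fun x => A (R + x)) (deriv A R) 0 := by
      rw [← d_add hA]; exact ((cd_add hA).differentiableAt one_ne_zero).hasDerivAt
    have hs := (h2.tendsto_slope.mono_left
      (nhdsWithin_mono _ (fun x hx => ne_of_gt hx) : 𝓝[>] (0:ℝ) ≤ 𝓝[≠] 0)).eventually
      (Iio_mem_nhds (lt_add_one (deriv A R)))
    obtain ⟨d, hd0, hdd⟩ := mem_nhdsGT_iff_exists_Ioo_subset.1 hs
    refine ⟨deriv A R + 1, d, hd0, fun x hx => ?_⟩
    have h1 := hdd hx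
    have hx0 := hx.1
    simp only [slope, vsub_eq_sub, sub_zero, smul_eq_mul, add_zero, hAR, mem_Iio, mem_ofPred_eq] at h1
    rw [inv_mul_eq_div, div_lt_iff₀ hx0] at h1
    exact h1.le
  have hmapI : MapsTo (fun x : ℝ => R + x) (Ici 0) (Ioi 0) := fun x hx => by
    have : (0:ℝ) ≤ x := hx
    exact (by linarith : 0 < R + x)
  have hBI : ContinuousOn (fun x => B (R + x)) (Ici 0) := hBc.comp (by fun_prop) hmapI
  have hCI : ContinuousOn (fun x => C (R + x)) (Ici 0) := hCc.comp (by fun_prop) hmapI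
  have hAI : Continuous (fun x => A (R + x)) := by fun_prop
  obtain ⟨v, v1, v2, hv, hv0, K, hK⟩ := exist_reg (A := fun x => A (R + x))
    (B := fun x => B (R + x)) (C := fun x => C (R + x)) hAI.continuousOn hBI hCI
    (fun x hx => hAp _ (by linarith)) (fun x hx => hBp _ (by linarith)) hδ hM one_pos
  have hRt := reg_lim_bdd (A := fun x => A (R + x)) (B := fun x => B (R + x))
    (C := fun x => C (R + x)) (v := v) (v1 := v1) (v2 := v2) (v0 := 1) one_pos
    (cd_add hA) (cd_add hB) (cd_add hC) hAI.continuousOn (hBI.mono Ioi_subset_Ici_self)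
    (by simpa using hAR) (fun x hx => hAp _ (by linarith)) (by simpa using hBR)
    (by rw [d_add hA]; simp only [add_zero]; linarith) hv hv0 hK
  have eA : deriv (fun x => -A (R - x)) 0 = deriv A R := by
    rw [deriv.fun_neg, d_refl hA]; ring
  have eC : deriv (fun x => -C (R - x)) 0 = deriv C R := by
    rw [deriv.fun_neg, d_refl hC]; ring
  simp only [sub_zero, eA, eC, d_refl hB] at hL
  simp only [add_zero, d_add hA, d_add hB, d_add hC] at hRt
  set m1 := -(C R * u0) / B R with hm1
  set m2 := -((deriv B R + C R) * m1 + deriv C R * u0) / (deriv A R + B R) with hm2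
  have hL1 : Tendsto u1 (𝓝[<] R) (𝓝 m1) := by
    apply unrefl
    have := hL.1.neg
    simp only [neg_neg] at this
    convert this using 2
    rw [hm1]; ring
  have hL2 : Tendsto u2 (𝓝[<] R) (𝓝 m2) := by
    apply unrefl
    convert hL.2 using 2
    rw [hm2, hm1]; ring
  have hR0 : Tendsto (fun r => u0 * v (r - R)) (𝓝[>] R) (𝓝 u0) := by
    simpa using (hv0.comp (shift_t1 R)).const_mul u0
  have hR1 : Tendsto (fun r => u0 * v1 (r - R)) (𝓝[>] R) (𝓝 m1) := by
    convert (hRt.1.comp (shift_t1 R)).const_mul u0 using 2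
    · rfl
    · rw [hm1]; ring
  have hR2 : Tendsto (fun r => u0 * v2 (r - R)) (𝓝[>] R) (𝓝 m2) := by
    convert (hRt.2.comp (shift_t1 R)).const_mul u0 using 2
    · rfl
    · rw [hm2, hm1]; ring
  -- glue
  set J : (ℝ → ℝ) → (ℝ → ℝ) → ℝ → ℝ := fun f g r => if r < R then f r else g r with hJ
  have Jl : ∀ f g : ℝ → ℝ, ∀ r < R, J f g =ᶠ[𝓝 r] f := by
    intro f g r hr
    filter_upwards [Iio_mem_nhds hr] with x hx
    exact if_pos hx
  have Jr : ∀ f g : ℝ → ℝ, ∀ r > R, J f g =ᶠ[𝓝 r] g := by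
    intro f g r hr
    filter_upwards [Ioi_mem_nhds hr] with x hx
    exact if_neg (not_lt.2 (le_of_lt hx))
  have Jt : ∀ f g : ℝ → ℝ, ∀ l, Tendsto f (𝓝[<] R) (𝓝 l) → Tendsto g (𝓝[>] R) (𝓝 l) →
      Tendsto (J f g) (𝓝[≠] R) (𝓝 l) := by
    intro f g l h1 h2
    rw [← Iio_union_Ioi, nhdsWithin_union]
    refine Tendsto.sup (h1.congr' ?_) (h2.congr' ?_)
    · filter_upwards [self_mem_nhdsWithin] with x hx
      exact (if_pos hx).symm
    · filter_upwards [self_mem_nhdsWithin] with x hx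
      exact (if_neg (not_lt.2 (le_of_lt hx))).symm
  have hvw : ∀ r ∈ Ioo R (R + 1), HasDerivAt (fun r => u0 * v (r - R)) (u0 * v1 (r - R)) r ∧
      HasDerivAt (fun r => u0 * v1 (r - R)) (u0 * v2 (r - R)) r ∧
      A r * (u0 * v2 (r - R)) + B r * (u0 * v1 (r - R)) + C r * (u0 * v (r - R)) = 0 := by
    intro r hr
    obtain ⟨h1, h2, h3⟩ := hv (r - R) ⟨by linarith [hr.1], by linarith [hr.2]⟩
    refine ⟨(hd_shift h1).const_mul u0, (hd_shift h2).const_mul u0, ?_⟩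
    simp only [add_sub_cancel] at h3
    linear_combination u0 * h3
  have hcl := u2_cont isOpen_Ioo (s := Ioo 0 R) hAc.continuousOn
    (hBc.mono Ioo_subset_Ioi_self) (hCc.mono Ioo_subset_Ioi_self)
    (fun r hr => (hAn r hr.2).ne) hu
  have hsub : Ioo R (R + 1) ⊆ Ioi 0 := fun r hr => hR.trans hr.1
  have hcr := u2_cont isOpen_Ioo (s := Ioo R (R + 1)) hAc.continuousOn
    (hBc.mono hsub) (hCc.mono hsub) (fun r hr => (hAp r hr.1).ne') hvw
  have G := glue (f := J u (fun r => u0 * v (r - R))) (f1 := J u1 (fun r => u0 * v1 (r - R)))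
    (f2 := J u2 (fun r => u0 * v2 (r - R))) (a := 0) (b := R + 1) (c := R) (l0 := u0) (l1 := m1)
    (l2 := m2) ⟨hR, by linarith⟩ (by
      intro r hr hne
      rcases lt_or_gt_of_ne hne with h | h
      · have hm : r ∈ Ioo 0 R := ⟨hr.1, h⟩
        have e1 : J u1 (fun r => u0 * v1 (r - R)) r = u1 r := if_pos h
        have e2 : J u2 (fun r => u0 * v2 (r - R)) r = u2 r := if_pos h
        rw [e1, e2]
        exact ⟨(hu r hm).1.congr_of_eventuallyEq (Jl _ _ r h),
          (hu r hm).2.1.congr_of_eventuallyEq (Jl _ _ r h), (hcl r hm).congr (Jl _ _ r h).symm⟩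
      · have hm : r ∈ Ioo R (R + 1) := ⟨h, hr.2⟩
        have hn : ¬ r < R := not_lt.2 h.le
        have e1 : J u1 (fun r => u0 * v1 (r - R)) r = u0 * v1 (r - R) := if_neg hn
        have e2 : J u2 (fun r => u0 * v2 (r - R)) r = u0 * v2 (r - R) := if_neg hn
        rw [e1, e2]
        exact ⟨(hvw r hm).1.congr_of_eventuallyEq (Jr _ _ r h),
          (hvw r hm).2.1.congr_of_eventuallyEq (Jr _ _ r h), (hcr r hm).congr (Jr _ _ r h).symm⟩)
    (Jt _ _ _ hu0 hR0) (Jt _ _ _ hL1 hR1) (Jt _ _ _ hL2 hR2)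
  refine ⟨_, _, _, fun r hr => ⟨(G r hr).1, (G r hr).2.1, (G r hr).2.2, ?_⟩, ?_⟩
  · by_cases hne : r = R
    · subst hne
      simp only [Function.update_self, hAR, hm1]
      field_simp
      ring
    · simp only [Function.update_of_ne hne]
      rcases lt_or_gt_of_ne hne with h | h
      · simp only [hJ, if_pos h]
        exact (hu r ⟨hr.1, h⟩).2.2
      · simp only [hJ, if_neg (not_lt.2 h.le)]
        exact (hvw r ⟨h, hr.2⟩).2.2
  · intro r hr
    rw [Function.update_of_ne hr.2.ne]
    exact if_pos hr.2

theorem pd_hd {ε r0 : ℝ} {f11 f22 f2 : ℝ → ℝ} (hε : ε ≤ 1/4) (hr0 : r0 ∈ Ioo 0 ε)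
    (hc : Continuous f11 ∧ Continuous f22 ∧ Continuous f2)
    (he : ∀ r ≤ 1, phi11 ε (1-r) = f11 r ∧ phi22 ε (1-r) = f22 r ∧ phi2d ε (1-r) = f2 r)
    (hn : ∀ r < 1 - r0, f22 r < 0) :
    ∀ r ∈ Ioo 0 (1 - r0), 0 < pd ε r0 r ∧
      HasDerivAt (pd ε r0) (pd ε r0 r * ((f11 r / r + f2 r) / f22 r)) r := by
  intro r hr
  obtain ⟨c1, c2, c3⟩ := hc
  have hr1 := hr0.1
  have hr2 := hr0.2
  set k : ℝ → ℝ := fun s => (phi11 ε (1-s) + s * phi2d ε (1-s)) / (s * phi22 ε (1-s)) with hk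
  have hkc : ContinuousOn k (Ioo 0 (1 - r0)) := by
    have : ContinuousOn (fun s => (f11 s + s * f2 s) / (s * f22 s)) (Ioo 0 (1 - r0)) :=
      ContinuousOn.div (by fun_prop) (by fun_prop)
        (fun s hs => mul_ne_zero hs.1.ne' (hn s hs.2).ne)
    refine this.congr (fun s hs => ?_)
    obtain ⟨e1, e2, e3⟩ := he s (by linarith [hs.2])
    simp only [hk, e1, e2, e3]
  have h1e : 1 - ε ∈ Ioo 0 (1 - r0) := ⟨by linarith, by linarith⟩
  have hI : HasDerivAt (fun r => ∫ s in (1-ε)..r, k s) (k r) r := by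
    apply intervalIntegral.integral_hasDerivAt_right
    · exact (hkc.mono ((convex_Ioo 0 (1 - r0)).ordConnected.uIcc_subset h1e hr)).intervalIntegrable
    · exact hkc.stronglyMeasurableAtFilter isOpen_Ioo r hr
    · exact hkc.continuousAt (isOpen_Ioo.mem_nhds hr)
  have hs : ∀ x < 1 - r0, Real.sign (1 - r0 - x) = 1 := fun x hx =>
    Real.sign_of_pos (by linarith)
  have hpd : ∀ x < 1 - r0, pd ε r0 x = (1/8) * (1 - ε) * Real.exp (∫ s in (1-ε)..x, k s) := by
    intro x hx
    rw [pd, hs x hx, mul_one]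
  have hk' : k r = (f11 r / r + f2 r) / f22 r := by
    obtain ⟨e1, e2, e3⟩ := he r (by linarith [hr.2])
    simp only [hk, e1, e2, e3]
    have := hr.1.ne'
    have := (hn r hr.2).ne
    field_simp
  constructor
  · rw [hpd r hr.2]
    have := Real.exp_pos (∫ s in (1-ε)..r, k s)
    have : 0 < 1 - ε := by linarith
    positivity
  · rw [hpd r hr.2, ← hk']
    have h := (hI.exp.const_mul ((1/8) * (1 - ε)))
    refine (h.congr_of_eventuallyEq ?_).congr_deriv (by ring)
    filter_upwards [Iio_mem_nhds hr.2] with x hx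
    exact hpd x hx

theorem pol_hd (r θ : ℝ) : HasDerivAt (fun t : ℝ => pol t θ) (Complex.exp ((θ : ℂ) * Complex.I)) r := by
  unfold pol
  have h := (Complex.ofRealCLM.hasDerivAt (x := r)).mul_const (Complex.exp ((θ : ℂ) * Complex.I))
  simpa using h

theorem pol_norm {r θ : ℝ} (hr : 0 ≤ r) : ‖pol r θ‖ = r := by
  rw [pol, norm_mul, Complex.norm_exp_ofReal_mul_I, mul_one, Complex.norm_real, Real.norm_of_nonneg hr]

theorem part2 {F : ℂ → ℝ} {P : ℝ → ℝ} {R : ℝ} (hR0 : 0 < R) (hR1 : R < 1)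
    (hP : Tendsto P (𝓝[<] R) (𝓝 0)) (hF : ContDiffOn ℝ 2 F (Metric.closedBall 0 1)) :
    TendstoUniformly (fun r θ => P r * Fr F r θ) (fun _ => 0) (𝓝[<] R) := by
  have hF' : ContDiffOn ℝ 2 F (Metric.ball 0 1) := hF.mono Metric.ball_subset_closedBall
  have hfc : ContinuousOn (fderiv ℝ F) (Metric.ball 0 1) :=
    hF'.continuousOn_fderiv_of_isOpen Metric.isOpen_ball one_le_two
  have hsub : Metric.closedBall (0:ℂ) R ⊆ Metric.ball 0 1 := Metric.closedBall_subset_ball hR1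
  obtain ⟨K, hK⟩ := (isCompact_closedBall (0:ℂ) R).exists_bound_of_continuousOn (hfc.mono hsub)
  have hbd : ∀ r ∈ Ioo 0 R, ∀ θ, |Fr F r θ| ≤ K := by
    intro r hr θ
    have hm : pol r θ ∈ Metric.closedBall (0:ℂ) R := by
      rw [mem_closedBall_zero_iff, pol_norm hr.1.le]; exact hr.2.le
    have hd : DifferentiableAt ℝ F (pol r θ) :=
      (hF'.differentiableOn two_ne_zero).differentiableAt (Metric.isOpen_ball.mem_nhds (hsub hm))
    have h1 := hd.hasFDerivAt.comp_hasDerivAt r (pol_hd r θ)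
    have h2 : Fr F r θ = fderiv ℝ F (pol r θ) (Complex.exp ((θ : ℂ) * Complex.I)) := h1.deriv
    rw [h2, ← Real.norm_eq_abs]
    refine ((fderiv ℝ F (pol r θ)).le_opNorm _).trans ?_
    rw [Complex.norm_exp_ofReal_mul_I, mul_one]
    exact hK _ hm
  rw [Metric.tendstoUniformly_iff]
  intro e he
  have h1 : Tendsto (fun r => |P r| * (|K| + 1)) (𝓝[<] R) (𝓝 0) := by
    simpa using hP.abs.mul_const (|K| + 1)
  filter_upwards [h1.eventually (Iio_mem_nhds he), Ioo_mem_nhdsLT hR0] with r hr hr2 θ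
  rw [dist_comm, Real.dist_eq, sub_zero, abs_mul]
  have h2 := hbd r hr2 θ
  have h3 : |P r| * |Fr F r θ| ≤ |P r| * (|K| + 1) :=
    mul_le_mul_of_nonneg_left (by linarith [le_abs_self K]) (abs_nonneg _)
  exact h3.trans_lt hr

theorem pol_pow (r θ : ℝ) (ν : ℕ) : (pol r θ ^ ν).re = r ^ ν * Real.cos (ν * θ) := by
  rw [pol, mul_pow, ← Complex.exp_nat_mul, ← Complex.ofReal_pow, Complex.re_ofReal_mul]
  have : (ν:ℂ) * ((θ:ℂ) * Complex.I) = ((ν * θ : ℝ) : ℂ) * Complex.I := by push_cast; ring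
  rw [this, Complex.exp_ofReal_mul_I_re]

theorem disc_ext {U U1 U2 G : ℝ → ℝ} {b d : ℝ} (ν : ℕ) (hb : 1 < b) (hd : 0 < d)
    (hU : ∀ r ∈ Ioo 0 b, HasDerivAt U (U1 r) r ∧ HasDerivAt U1 (U2 r) r ∧ ContinuousAt U2 r)
    (hG : ContDiffOn ℝ 2 G (Ioo (-1) 1)) (hUG : ∀ r ∈ Ioo 0 d, U r = r ^ ν * G (r ^ 2)) :
    ∃ F : ℂ → ℝ, ContDiffOn ℝ 2 F (Metric.closedBall 0 1) ∧
      ∀ r > 0, ∀ θ, F (pol r θ) = U r * Real.cos (ν * θ) := by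
  set F : ℂ → ℝ := fun z => if z = 0 then (z ^ ν).re * G (‖z‖ ^ 2) else
    U ‖z‖ / ‖z‖ ^ ν * (z ^ ν).re with hF
  have hre : ContDiff ℝ 2 (fun z : ℂ => (z ^ ν).re) :=
    Complex.reCLM.contDiff.comp (contDiff_id.pow ν)
  refine ⟨F, ?_, ?_⟩
  · intro z hz
    apply ContDiffAt.contDiffWithinAt
    by_cases hz0 : z = 0
    · subst hz0
      have hg : ContDiffAt ℝ 2 (fun z : ℂ => (z ^ ν).re * G (‖z‖ ^ 2)) 0 := by
        refine hre.contDiffAt.mul ?_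
        have h1 : ContDiffAt ℝ 2 G (‖(0:ℂ)‖ ^ 2) :=
          hG.contDiffAt (isOpen_Ioo.mem_nhds (by simp))
        exact ContDiffAt.comp (0:ℂ) h1 (contDiff_norm_sq ℝ).contDiffAt
      refine hg.congr_of_eventuallyEq ?_
      filter_upwards [Metric.ball_mem_nhds (0:ℂ) hd] with w hw
      by_cases hw0 : w = 0
      · exact if_pos hw0
      · have hn : 0 < ‖w‖ := norm_pos_iff.2 hw0
        rw [mem_ball_zero_iff] at hw
        simp only [hF, if_neg hw0]
        rw [hUG ‖w‖ ⟨hn, hw⟩, mul_div_cancel_left₀ _ (pow_ne_zero _ hn.ne'), mul_comm]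
    · have hn : 0 < ‖z‖ := norm_pos_iff.2 hz0
      rw [mem_closedBall_zero_iff] at hz
      have hUc : ContDiffAt ℝ 2 U ‖z‖ := (cd2 isOpen_Ioo hU).contDiffAt
        (isOpen_Ioo.mem_nhds ⟨hn, by linarith⟩)
      have hnc : ContDiffAt ℝ 2 (fun z : ℂ => ‖z‖) z := contDiffAt_norm ℝ hz0
      have hg : ContDiffAt ℝ 2 (fun z : ℂ => U ‖z‖ / ‖z‖ ^ ν * (z ^ ν).re) z :=
        ((ContDiffAt.comp z hUc hnc).div (hnc.pow ν) (pow_ne_zero _ hn.ne')).mul hre.contDiffAt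
      refine hg.congr_of_eventuallyEq ?_
      filter_upwards [isOpen_ne.mem_nhds hz0] with w hw
      exact if_neg hw
  · intro r hr θ
    have h0 : pol r θ ≠ 0 := by
      rw [← norm_pos_iff, pol_norm hr.le]; exact hr
    simp only [hF, if_neg h0]
    rw [pol_norm hr.le, pol_pow]
    have := (pow_pos hr ν).ne'
    field_simp

theorem disc_derivs {F : ℂ → ℝ} {U U1 U2 : ℝ → ℝ} {b : ℝ} {ν : ℕ}
    (hU : ∀ r ∈ Ioo 0 b, HasDerivAt U (U1 r) r ∧ HasDerivAt U1 (U2 r) r)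
    (hF : ∀ r > 0, ∀ θ, F (pol r θ) = U r * Real.cos (ν * θ)) :
    ∀ r ∈ Ioo 0 b, ∀ θ, Fr F r θ = U1 r * Real.cos (ν * θ) ∧
      Frr F r θ = U2 r * Real.cos (ν * θ) ∧ Ftt F r θ = -(ν:ℝ)^2 * (U r * Real.cos (ν * θ)) := by
  intro r hr θ
  have h1 : ∀ t ∈ Ioo 0 b, deriv (fun t : ℝ => F (pol t θ)) t = U1 t * Real.cos (ν * θ) := by
    intro t ht
    refine (((hU t ht).1.mul_const (Real.cos (ν * θ))).congr_of_eventuallyEq ?_).deriv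
    filter_upwards [Ioi_mem_nhds ht.1] with x hx
    exact hF x hx θ
  refine ⟨h1 r hr, ?_, ?_⟩
  · refine (((hU r hr).2.mul_const (Real.cos (ν * θ))).congr_of_eventuallyEq ?_).deriv
    filter_upwards [isOpen_Ioo.mem_nhds hr] with x hx
    exact h1 x hx
  · have e : (fun s : ℝ => F (pol r s)) = fun s => U r * Real.cos (ν * s) :=
      funext fun s => hF r hr.1 s
    have hl : ∀ s : ℝ, HasDerivAt (fun s : ℝ => (ν:ℝ) * s) ν s := fun s => by
      simpa using (hasDerivAt_id s).const_mul (ν:ℝ)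
    have e1 : deriv (fun s : ℝ => F (pol r s)) = fun s => U r * (-Real.sin (ν * s) * ν) := by
      rw [e]
      funext s
      exact ((hl s).cos.const_mul (U r)).deriv
    rw [Ftt, e1, ((((hl θ).sin.fun_neg).mul_const (ν:ℝ)).const_mul (U r)).deriv]
    ring

theorem stmt16 :
    ∃ ε₀ > (0:ℝ), ∀ ε : ℝ, 0 < ε → ε ≤ ε₀ →
      ∀ r0 ∈ Ioo (0:ℝ) ε, phi22 ε r0 = 0 →
      (∀ (lam : ℝ) (ν : ℕ) (u u' : ℝ → ℝ),
        IsRadSol ε lam ν (Ioo 0 (1 - r0)) u u' →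
        (∃ C : ℝ, ∃ δ > (0:ℝ), ∀ r ∈ Ioo (0:ℝ) δ, |u r| ≤ C) →
        (Tendsto (fun r => pd ε r0 r * u' r) (𝓝[<] (1 - r0)) (𝓝 0) ↔
          ∃ F : ℂ → ℝ, IsDiscSol ε lam F ∧
            ∀ r ∈ Ioo (0:ℝ) (1 - r0), ∀ θ : ℝ, F (pol r θ) = u r * Real.cos (ν*θ))) ∧
      (∀ (lam : ℝ) (F : ℂ → ℝ), IsDiscSol ε lam F →
        TendstoUniformly (fun r θ => pd ε r0 r * Fr F r θ) (fun _ => 0)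
          (𝓝[<] (1 - r0))) := by
  obtain ⟨ε₀, h0, h14, hco⟩ := coef
  refine ⟨ε₀, h0, fun ε hε hle r0 hr0 hz => ?_⟩
  obtain ⟨f11, f22, f2, ⟨c1, c2, c3⟩, he, hn, hp, hAR, ⟨d1, d2, d3⟩, hBp, hin, hAB⟩ :=
    hco ε hε hle r0 hr0 hz
  have hε4 : ε ≤ 1/4 := hle.trans h14
  have hr1 := hr0.1
  have hr2 := hr0.2
  have hR0 : 0 < 1 - r0 := by linarith
  have hR1 : 1 - r0 < 1 := by linarith
  have hP := pd_hd hε4 hr0 ⟨c1, c2, c3⟩ he hn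
  have hBd : ContDiffAt ℝ 1 (fun r => f11 r / r + f2 r) (1 - r0) :=
    (d1.div contDiffAt_id hR0.ne').add d3
  have hPl : Tendsto (pd ε r0) (𝓝[<] (1 - r0)) (𝓝 0) :=
    P_lim (A := f22) (B := fun r => f11 r / r + f2 r) hR0 hn hAR d2 hBd (hBp _ le_rfl) hP
  have part2' : ∀ (lam : ℝ) (F : ℂ → ℝ), IsDiscSol ε lam F →
        TendstoUniformly (fun r θ => pd ε r0 r * Fr F r θ) (fun _ => 0) (𝓝[<] (1 - r0)) :=
    fun lam F hF => part2 hR0 hR1 hPl hF.1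
  refine ⟨?_, part2'⟩
  intro lam ν u u' hu ⟨K, δ, hδ, hK⟩
  constructor
  · intro hPu
    set C : ℝ → ℝ := fun r => -((ν:ℝ)^2/r^2) * f11 r - lam with hC
    have hCd : ContDiffAt ℝ 1 C (1 - r0) := by
      refine ContDiffAt.sub (ContDiffAt.mul (ContDiffAt.neg ?_) d1) contDiffAt_const
      exact contDiffAt_const.div (contDiffAt_id.pow 2) (pow_ne_zero 2 hR0.ne')
    have hBc : ContinuousOn (fun r => f11 r / r + f2 r) (Ioi 0) :=
      (c1.continuousOn.div continuousOn_id (fun x hx => ne_of_gt hx)).add c3.continuousOn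
    have hCc : ContinuousOn C (Ioi 0) := by
      refine ((ContinuousOn.div continuousOn_const (by fun_prop)
        (fun x hx => pow_ne_zero 2 (ne_of_gt hx))).neg.mul c1.continuousOn).sub continuousOn_const
    have hode : ∀ r ∈ Ioo 0 (1 - r0), HasDerivAt u (u' r) r ∧ HasDerivAt u' (deriv u' r) r ∧
        f22 r * deriv u' r + (f11 r / r + f2 r) * u' r + C r * u r = 0 := by
      intro r hr
      obtain ⟨g1, d, g2, g3⟩ := hu r hr
      obtain ⟨e1, e2, e3⟩ := he r (by linarith [hr.2])
      rw [e1, e2, e3] at g3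
      rw [g2.deriv]
      refine ⟨g1, g2, ?_⟩
      simp only [hC]
      linear_combination g3
    obtain ⟨U, U1, U2, hU, hUu⟩ := match_ext (P := pd ε r0) (A := f22)
      (B := fun r => f11 r / r + f2 r) (C := C) (u := u) (u1 := u') (u2 := deriv u')
      hR0 c2 hBc hCc hn hp hAR d2 hBd hCd hBp hAB hP hode hPu
    obtain ⟨G, hG, d, hd, hdG⟩ := origin (u := u) (u1 := u') (u2 := deriv u') (ρ := 1 - ε)
      (δ := δ) (K := K) (μ := -8 * lam) ν (by linarith) hδ (by
        intro r hr
        obtain ⟨g1, g2, g3⟩ := hode r ⟨hr.1, by linarith [hr.2]⟩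
        obtain ⟨e1, e2, e3⟩ := hin r hr.2.le
        refine ⟨g1, g2, ?_⟩
        simp only [hC, e1, e2, e3] at g3
        linear_combination (-8) * g3) hK
    have hUG : ∀ r ∈ Ioo 0 (min d (1 - r0)), U r = r ^ ν * G (r ^ 2) := by
      intro r hr
      have h := lt_min_iff.1 hr.2
      rw [hUu r ⟨hr.1, h.2⟩, hdG r ⟨hr.1, h.1⟩]
    obtain ⟨F, hF1, hF2⟩ := disc_ext (b := 1 - r0 + 1) ν (by linarith) (lt_min hd hR0)
      (fun r hr => ⟨(hU r hr).1, (hU r hr).2.1, (hU r hr).2.2.1⟩) hG hUG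
    refine ⟨F, ⟨hF1, ?_⟩, ?_⟩
    · intro r hr θ
      have hm : r ∈ Ioo 0 (1 - r0 + 1) := ⟨hr.1, by linarith [hr.2]⟩
      obtain ⟨t1, t2, t3⟩ := disc_derivs (fun r hr => ⟨(hU r hr).1, (hU r hr).2.1⟩) hF2 r hm θ
      obtain ⟨e1, e2, e3⟩ := he r hr.2
      rw [t1, t2, t3, e1, e2, e3, hF2 r hr.1]
      have g := (hU r hm).2.2.2
      simp only [hC] at g
      linear_combination Real.cos (ν * θ) * g
    · intro r hr θ
      rw [hF2 r hr.1, hUu r hr]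
  · rintro ⟨F, hF, hFu⟩
    have h1 := (part2' lam F hF).tendsto_at 0
    refine h1.congr' ?_
    filter_upwards [Ioo_mem_nhdsLT hR0] with r hr
    have h2 : Fr F r 0 = u' r := by
      refine ((hu r hr).1.congr_of_eventuallyEq ?_).deriv
      filter_upwards [isOpen_Ioo.mem_nhds hr] with x hx
      rw [hFu x hx 0]
      simp
    rw [h2]
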